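/- arXiv:0711.4457 — 3 statements merged into one kernel-verified Lean document; each statement's English description precedes it below -/
import Mathlib

section
/- Let β ∈ (0,1), b ≥ 1, and let K: ℝ → ℝ satisfy Assumption (K1) with exponent β and threshold x₀ = b and Assumption (K2) with threshold x₀ = b. For n ∈ ℕ set K_{b,n}(x) := K(x)·1_{{b < |x| ≤ n}}. Then: (i) for every u ≠ 0 the limit φ_b(u) := lim_{n→∞} (1/2π) ∫_ℝ e^{−ixu} K_{b,n}(x)/x dx exists, and there is a constant C, not depending on b, n or u, such that |φ_b(u)| ≤ C|u|^{−β} for 0 < |u| < 1/b and |φ_b(u)| ≤ C b^{β−1}|u|^{−1} for all u ≠ 0; (ii) for each fixed b there is a constant C', not depending on n or u, such that |(1/2π) ∫_ℝ e^{−ixu} K_{b,n}(x)/x dx| ≤ C'|u|^{−β} for 0 < |u| < 1/b and ≤ C'|u|^{−1} for all u ≠ 0. (Paper's Lemma 4.1 together with the limit relation (4.12).) -/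
open MeasureTheory Real Set Filter
open scoped ENNReal Topology

noncomputable def nrm (α : ℝ) {S : Type*} [MeasurableSpace S] (μ : Measure S) (f : S → ℝ) : ℝ :=
  (∫ s, |f s| ^ α ∂μ) ^ (1 / α)

noncomputable def dep2 (α : ℝ) {S : Type*} [MeasurableSpace S] (μ : Measure S) (f g : S → ℝ) : ℝ :=
  ∫ s, |f s * g s| ^ (α / 2) ∂μ

noncomputable def dep1s (α : ℝ) {S : Type*} [MeasurableSpace S] (μ : Measure S) (f g : S → ℝ) : ℝ :=
  ∫ s, |f s| ^ (α - 1) * |g s| ∂μ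

noncomputable def dep1 (α : ℝ) {S : Type*} [MeasurableSpace S] (μ : Measure S) (f g : S → ℝ) : ℝ :=
  dep1s α μ f g + dep1s α μ g f

/-- `f ∈ L^α(S, μ)`. -/
def MemLalpha (α : ℝ) {S : Type*} [MeasurableSpace S] (μ : Measure S) (f : S → ℝ) : Prop :=
  AEStronglyMeasurable f μ ∧ Integrable (fun s => |f s| ^ α) μ

/-- Assumption (A1) with constant ε₁. -/
def A1 (α ε₁ : ℝ) {S : Type*} [MeasurableSpace S] (μ : Measure S) (f g : S → ℝ) : Prop :=
  nrm α μ f ^ (α / 2) * nrm α μ g ^ (α / 2) - dep2 α μ f g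
    ≥ ε₁ * (nrm α μ f ^ (α / 2) * nrm α μ g ^ (α / 2))

/-- Assumption (A2) with constant ε₂. -/
def A2 (α ε₂ : ℝ) {S : Type*} [MeasurableSpace S] (μ : Measure S) (f g : S → ℝ) : Prop :=
  ∀ u v : ℝ, nrm α μ (fun s => u * f s + v * g s) ^ α
    ≥ ε₂ * (|u| ^ α * nrm α μ f ^ α + |v| ^ α * nrm α μ g ^ α)

noncomputable def Ufun (α : ℝ) {S : Type*} [MeasurableSpace S] (μ : Measure S)
    (f g : S → ℝ) (u v : ℝ) : ℝ :=
  Real.exp (-(nrm α μ (fun s => u * f s + v * g s) ^ α)) -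
    Real.exp (-(nrm α μ (fun s => u * f s) ^ α) - nrm α μ (fun s => v * g s) ^ α)

/-- signed power `a^⟨p⟩ = sign(a)|a|^p`. -/
noncomputable def spow (a p : ℝ) : ℝ := Real.sign a * |a| ^ p

noncomputable def D1 (α : ℝ) {S : Type*} [MeasurableSpace S] (μ : Measure S)
    (f g : S → ℝ) (u v : ℝ) : ℝ :=
  -α * (∫ s, spow (u * f s + v * g s) (α - 1) * f s ∂μ) *
      Real.exp (-(nrm α μ (fun s => u * f s + v * g s) ^ α)) +
    α * (∫ s, spow (u * f s) (α - 1) * f s ∂μ) *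
      Real.exp (-(nrm α μ (fun s => u * f s) ^ α) - nrm α μ (fun s => v * g s) ^ α)

noncomputable def D2 (α : ℝ) {S : Type*} [MeasurableSpace S] (μ : Measure S)
    (f g : S → ℝ) (u v : ℝ) : ℝ :=
  -(α * (α - 1)) * (∫ s, (if f s = 0 ∨ g s = 0 then (0:ℝ) else
        |u * f s + v * g s| ^ (α - 2) * (f s * g s)) ∂μ) *
      Real.exp (-(nrm α μ (fun s => u * f s + v * g s) ^ α)) +
    α ^ 2 * (∫ s, spow (u * f s + v * g s) (α - 1) * f s ∂μ) *
      (∫ s, spow (u * f s + v * g s) (α - 1) * g s ∂μ) *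
      Real.exp (-(nrm α μ (fun s => u * f s + v * g s) ^ α)) -
    α ^ 2 * (∫ s, spow (u * f s) (α - 1) * f s ∂μ) *
      (∫ s, spow (v * g s) (α - 1) * g s ∂μ) *
      Real.exp (-(nrm α μ (fun s => u * f s) ^ α) - nrm α μ (fun s => v * g s) ^ α)

/-- `(ξ, η)` is jointly SαS with spectral pair `(f, g)`. -/
def JointSAS (α : ℝ) {S : Type*} [MeasurableSpace S] (μ : Measure S) (f g : S → ℝ)
    {Ω : Type*} [MeasurableSpace Ω] (P : Measure Ω) (ξ η : Ω → ℝ) : Prop :=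
  ∀ u v : ℝ, (∫ ω, Complex.exp (Complex.I * ((u * ξ ω + v * η ω : ℝ) : ℂ)) ∂P)
    = Complex.exp (-((nrm α μ (fun s => u * f s + v * g s) ^ α : ℝ) : ℂ))

/-!
Shifting the variable by half a period of `e^{-ixu}` shows that the transform of `f` is at most half
the `L¹`-distance between `f` and its translate by `π / u`. For a function which jumps up at `s` to
at most `M` and then decreases to `0` that distance is at most `2πM / |u|`, because the decreasing
part telescopes. Each half of `K(x) / x`, truncated at `b`, is such a function with `M = c b^{β-1}`,
which gives the bound `b^{β-1} |u|⁻¹`; truncated at `1 / |u|` it gives `|u|^{-β}`, and the remaining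
piece over `(b, 1 / |u|]` is bounded by `∫₀^{1/|u|} c x^{β-1} dx`. As `c s^{β-1} → 0`, the
contribution of `(s, ∞)` vanishes as `s → ∞`, whence the limit exists.
-/

open scoped FourierTransform

lemma norm_fourier_le_half_integral_norm_sub_translate {V E : Type*} [NormedAddCommGroup V]
    [InnerProductSpace ℝ V] [FiniteDimensional ℝ V] [MeasurableSpace V] [BorelSpace V]
    [NormedAddCommGroup E] [NormedSpace ℂ E] {f : V → E} (hf : Integrable f) {w : V}
    (hw : w ≠ 0) :
    ‖𝓕 f w‖ ≤ 1 / 2 * ∫ v, ‖f v - f (v + (1 / (2 * ‖w‖ ^ 2) : ℝ) • w)‖ := by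
  rw [Real.fourier_eq, fourierIntegral_eq_half_sub_half_period_translate hw hf, norm_smul]
  have norm_half : ‖(1 / 2 : ℂ)‖ = 1 / 2 := by simp
  rw [norm_half]
  gcongr
  refine (norm_integral_le_integral_norm _).trans_eq ?_
  simp only [Circle.norm_smul]

section DecreasingAfterJump

variable {G : ℝ → ℝ} {s M h : ℝ}

lemma abs_sub_comp_add_le_add_indicator (hh : 0 < h) (hzero : ∀ x ≤ s, G x = 0)
    (hanti : AntitoneOn G (Ioi s)) (hmem : ∀ x, G x ∈ Icc 0 M) (x : ℝ) :
    |G x - G (x + h)| ≤ G x - G (x + h) + (Ioc (s - h) s).indicator (fun _ => 2 * M) x := by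
  rcases lt_or_ge s x with hsx | hxs
  · have hle : G (x + h) ≤ G x := hanti hsx (mem_Ioi.2 (by linarith)) (by linarith)
    rw [abs_of_nonneg (by linarith), indicator_of_notMem (fun hx => hsx.not_ge hx.2), add_zero]
  · rw [hzero x hxs, zero_sub, abs_neg, abs_of_nonneg (hmem _).1]
    rcases lt_or_ge (s - h) x with hshx | hxsh
    · rw [indicator_of_mem (show x ∈ Ioc (s - h) s from ⟨hshx, hxs⟩)]
      linarith [(hmem (x + h)).2]
    · rw [indicator_of_notMem (fun hx => hxsh.not_gt hx.1), hzero (x + h) (by linarith)]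
      simp

lemma integral_abs_sub_comp_add_le_of_pos (hG : Integrable G) (hh : 0 < h)
    (hzero : ∀ x ≤ s, G x = 0) (hanti : AntitoneOn G (Ioi s)) (hmem : ∀ x, G x ∈ Icc 0 M) :
    ∫ x, |G x - G (x + h)| ≤ 2 * M * h := by
  have hdiff : Integrable fun x => G x - G (x + h) := hG.sub (hG.comp_add_right h)
  have hjump : Integrable ((Ioc (s - h) s).indicator fun _ => 2 * M) :=
    (integrable_indicator_iff measurableSet_Ioc).2 (integrableOn_const measure_Ioc_lt_top.ne)
  calc ∫ x, |G x - G (x + h)|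
      ≤ ∫ x, (G x - G (x + h) + (Ioc (s - h) s).indicator (fun _ => 2 * M) x) :=
        integral_mono hdiff.abs (hdiff.add hjump)
          (abs_sub_comp_add_le_add_indicator hh hzero hanti hmem)
    _ = 2 * M * h := by
        rw [integral_add hdiff hjump, integral_sub hG (hG.comp_add_right h),
          integral_add_right_eq_self, integral_indicator_const _ measurableSet_Ioc]
        simp [hh.le, mul_comm]

lemma integral_abs_sub_comp_add_le (hG : Integrable G) (hzero : ∀ x ≤ s, G x = 0)
    (hanti : AntitoneOn G (Ioi s)) (hmem : ∀ x, G x ∈ Icc 0 M) (h : ℝ) :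
    ∫ x, |G x - G (x + h)| ≤ 2 * M * |h| := by
  rcases lt_trichotomy h 0 with hh | rfl | hh
  · calc ∫ x, |G x - G (x + h)|
        = ∫ x, |G (x + -h) - G (x + -h + h)| :=
          (integral_add_right_eq_self (fun x => |G x - G (x + h)|) (-h)).symm
      _ = ∫ x, |G x - G (x + -h)| := by simp only [neg_add_cancel_right, abs_sub_comm]
      _ ≤ 2 * M * |h| := by
          rw [abs_of_neg hh]
          exact integral_abs_sub_comp_add_le_of_pos hG (neg_pos.2 hh) hzero hanti hmem
  · simp
  · rw [abs_of_pos hh]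
    exact integral_abs_sub_comp_add_le_of_pos hG hh hzero hanti hmem

lemma norm_fourier_ofReal_le_of_antitoneOn (hG : Integrable G) (hzero : ∀ x ≤ s, G x = 0)
    (hanti : AntitoneOn G (Ioi s)) (hmem : ∀ x, G x ∈ Icc 0 M) {w : ℝ} (hw : w ≠ 0) :
    ‖𝓕 (fun x => (G x : ℂ)) w‖ ≤ M / (2 * |w|) := by
  set h : ℝ := 1 / (2 * ‖w‖ ^ 2) * w with hh
  have h_abs : |h| = 1 / (2 * |w|) := by
    have := abs_ne_zero.2 hw
    rw [hh, abs_mul, Real.norm_eq_abs, abs_of_nonneg (by positivity)]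
    field_simp
  calc ‖𝓕 (fun x => (G x : ℂ)) w‖
      ≤ 1 / 2 * ∫ x, ‖(G x : ℂ) - G (x + h)‖ :=
        norm_fourier_le_half_integral_norm_sub_translate hG.ofReal hw
    _ = 1 / 2 * ∫ x, |G x - G (x + h)| := by
        simp only [← Complex.ofReal_sub, Complex.norm_real, Real.norm_eq_abs]
    _ ≤ 1 / 2 * (2 * M * |h|) := by
        gcongr
        exact integral_abs_sub_comp_add_le hG hzero hanti hmem h
    _ = M / (2 * |w|) := by rw [h_abs]; ring

end DecreasingAfterJump

lemma antitoneOn_indicator_Ioc {α : Type*} [LinearOrder α] {g : α → ℝ} {s : α}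
    (hanti : AntitoneOn g (Ioi s)) (hnonneg : ∀ x ∈ Ioi s, 0 ≤ g x) (t : α) :
    AntitoneOn ((Ioc s t).indicator g) (Ioi s) := by
  intro x hx y hy hxy
  by_cases hyt : y ≤ t
  · rw [indicator_of_mem (show y ∈ Ioc s t from ⟨hy, hyt⟩),
      indicator_of_mem (show x ∈ Ioc s t from ⟨hx, hxy.trans hyt⟩)]
    exact hanti hx hy hxy
  · rw [indicator_of_notMem (fun h => hyt h.2)]
    exact indicator_nonneg (fun z hz => hnonneg z hz.1) x

lemma integrableOn_Ioc_of_antitoneOn_of_mem_Icc {g : ℝ → ℝ} {s M : ℝ}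
    (hanti : AntitoneOn g (Ioi s)) (hmem : ∀ x ∈ Ioi s, g x ∈ Icc 0 M) (t : ℝ) :
    IntegrableOn g (Ioc s t) := by
  have hmeas : AEMeasurable g (volume.restrict (Ioc s t)) :=
    aemeasurable_restrict_of_antitoneOn measurableSet_Ioc (hanti.mono Ioc_subset_Ioi_self)
  refine .of_bound measure_Ioc_lt_top hmeas.aestronglyMeasurable M ?_
  filter_upwards [ae_restrict_mem measurableSet_Ioc] with x hx
  rw [Real.norm_eq_abs, abs_of_nonneg (hmem x hx.1).1]
  exact (hmem x hx.1).2

/-- The Fourier integral `∫ e^{-ixu} g(x) dx` of `g` over `(s, t]`, in terms of the angular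
frequency `u`; it is `0` for `t ≤ s`. -/
noncomputable def fourierIoc (g : ℝ → ℝ) (s t u : ℝ) : ℂ :=
  ∫ x in Ioc s t, Complex.exp (-(Complex.I * x * u)) * g x

section fourierIoc

variable {g : ℝ → ℝ} {s t u M : ℝ}

lemma norm_exp_neg_I_mul_mul (x u : ℝ) : ‖Complex.exp (-(Complex.I * x * u))‖ = 1 := by
  simp [Complex.norm_exp]

lemma integrable_exp_neg_I_mul_mul {μ : Measure ℝ} (hg : Integrable g μ) (u : ℝ) :
    Integrable (fun x : ℝ => Complex.exp (-(Complex.I * x * u)) * g x) μ :=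
  hg.ofReal.bdd_mul (c := 1) (by fun_prop)
    (ae_of_all _ fun x => (norm_exp_neg_I_mul_mul x u).le)

lemma fourierIoc_eq_integral_indicator (g : ℝ → ℝ) (s t u : ℝ) :
    fourierIoc g s t u =
      ∫ x : ℝ, Complex.exp (-(Complex.I * x * u)) * ((Ioc s t).indicator g x : ℝ) := by
  rw [fourierIoc, ← integral_indicator measurableSet_Ioc]
  congr 1 with x
  by_cases hx : x ∈ Ioc s t <;> simp [hx]

lemma fourierIoc_eq_fourier (g : ℝ → ℝ) (s t u : ℝ) :
    fourierIoc g s t u =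
      𝓕 (fun x => (((Ioc s t).indicator g x : ℝ) : ℂ)) (u / (2 * π)) := by
  rw [fourierIoc_eq_integral_indicator, Real.fourier_real_eq_integral_exp_smul]
  congr 1 with x
  rw [smul_eq_mul]
  congr 2
  push_cast
  field_simp

lemma fourierIoc_add_adjacent {r : ℝ} (hsr : s ≤ r) (hrt : r ≤ t)
    (hg : IntegrableOn g (Ioc s t)) (u : ℝ) :
    fourierIoc g s r u + fourierIoc g r t u = fourierIoc g s t u := by
  have hint : IntegrableOn _ (Ioc s t) := integrable_exp_neg_I_mul_mul hg u
  rw [fourierIoc, fourierIoc, fourierIoc, ← Ioc_union_Ioc_eq_Ioc hsr hrt]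
  rw [← Ioc_union_Ioc_eq_Ioc hsr hrt] at hint
  exact (setIntegral_union (Ioc_disjoint_Ioc_of_le le_rfl) measurableSet_Ioc
    hint.left_of_union hint.right_of_union).symm

lemma norm_fourierIoc_le_of_antitoneOn (hanti : AntitoneOn g (Ioi s))
    (hmem : ∀ x ∈ Ioi s, g x ∈ Icc 0 M) (t : ℝ) (hu : u ≠ 0) :
    ‖fourierIoc g s t u‖ ≤ π * M / |u| := by
  have hM : 0 ≤ M := (hmem (s + 1) (by simp)).1.trans (hmem (s + 1) (by simp)).2
  have hzero : ∀ x ≤ s, (Ioc s t).indicator g x = 0 :=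
    fun x hx => indicator_of_notMem (fun h => hx.not_gt h.1) g
  have hmem' : ∀ x, (Ioc s t).indicator g x ∈ Icc 0 M := fun x =>
    ⟨indicator_nonneg (fun y hy => (hmem y hy.1).1) x,
      indicator_apply_le' (fun hx => (hmem x hx.1).2) fun _ => hM⟩
  rw [fourierIoc_eq_fourier]
  refine (norm_fourier_ofReal_le_of_antitoneOn
    ((integrable_indicator_iff measurableSet_Ioc).2
      (integrableOn_Ioc_of_antitoneOn_of_mem_Icc hanti hmem t)) hzero
    (antitoneOn_indicator_Ioc hanti (fun x hx => (hmem x hx).1) t) hmem'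
    (div_ne_zero hu (by positivity))).trans_eq ?_
  rw [abs_div, abs_of_pos Real.two_pi_pos]
  field_simp

end fourierIoc

/-- Non-increasing functions on `(s, ∞)` bounded in absolute value by `c x^{β-1}`: for a kernel
`K` satisfying (K1) and (K2), both `K(x) / x` and its reflection `K(-x) / (-x)` are of this kind. -/
structure AntitonePowerTail (β c s : ℝ) (g : ℝ → ℝ) : Prop where
  antitoneOn : AntitoneOn g (Ioi s)
  abs_le : ∀ x ∈ Ioi s, |g x| ≤ c * x ^ (β - 1)

namespace AntitonePowerTail

variable {β c s : ℝ} {g : ℝ → ℝ}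

lemma mono_left {r : ℝ} (hg : AntitonePowerTail β c s g) (hsr : s ≤ r) :
    AntitonePowerTail β c r g :=
  ⟨hg.antitoneOn.mono (Ioi_subset_Ioi hsr), fun x hx => hg.abs_le x (hsr.trans_lt hx)⟩

lemma const_nonneg (hg : AntitonePowerTail β c s g) : 0 ≤ c := by
  obtain ⟨x, hsx, hx_pos⟩ := ((eventually_gt_atTop s).and (eventually_gt_atTop 0)).exists
  exact nonneg_of_mul_nonneg_left ((abs_nonneg _).trans (hg.abs_le x hsx))
    (Real.rpow_pos_of_pos hx_pos _)

lemma nonneg (hg : AntitonePowerTail β c s g) (hβ : β < 1) {x : ℝ} (hx : x ∈ Ioi s) :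
    0 ≤ g x := by
  have hlim : Tendsto (fun y : ℝ => c * y ^ (β - 1)) atTop (𝓝 0) := by
    simpa using (tendsto_rpow_neg_atTop (sub_pos.2 hβ)).const_mul c
  have hg_lim : Tendsto g atTop (𝓝 0) :=
    squeeze_zero_norm' ((eventually_gt_atTop s).mono hg.abs_le) hlim
  exact le_of_tendsto hg_lim ((eventually_ge_atTop x).mono fun y hxy =>
    hg.antitoneOn hx (lt_of_lt_of_le hx hxy) hxy)

lemma mem_Icc (hg : AntitonePowerTail β c s g) (hβ : β < 1) (hs : 0 < s) (x : ℝ)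
    (hx : x ∈ Ioi s) : g x ∈ Icc 0 (c * s ^ (β - 1)) := by
  refine ⟨hg.nonneg hβ hx, (le_abs_self _).trans ((hg.abs_le x hx).trans ?_)⟩
  exact mul_le_mul_of_nonneg_left
    (Real.rpow_le_rpow_of_nonpos hs (le_of_lt hx) (by linarith)) (hg.const_nonneg)

lemma integrableOn_Ioc (hg : AntitonePowerTail β c s g) (hβ : β < 1) (hs : 0 < s) (t : ℝ) :
    IntegrableOn g (Ioc s t) :=
  integrableOn_Ioc_of_antitoneOn_of_mem_Icc hg.antitoneOn (hg.mem_Icc hβ hs) t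

lemma norm_fourierIoc_le_inv (hg : AntitonePowerTail β c s g) (hβ : β < 1) (hs : 0 < s)
    (t : ℝ) {u : ℝ} (hu : u ≠ 0) :
    ‖fourierIoc g s t u‖ ≤ π * (c * s ^ (β - 1)) / |u| :=
  norm_fourierIoc_le_of_antitoneOn hg.antitoneOn (hg.mem_Icc hβ hs) t hu

lemma norm_fourierIoc_le_of_le_right (hg : AntitonePowerTail β c s g) (hβ : 0 < β) (hs : 0 < s)
    {t r : ℝ} (hr : 0 ≤ r) (htr : t ≤ r) (u : ℝ) :
    ‖fourierIoc g s t u‖ ≤ c / β * r ^ β := by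
  have hpow : IntegrableOn (fun x : ℝ => c * x ^ (β - 1)) (Ioc 0 r) :=
    (intervalIntegrable_iff_integrableOn_Ioc_of_le hr).1
      ((intervalIntegral.intervalIntegrable_rpow' (by linarith)).const_mul c)
  have hsub : Ioc s t ⊆ Ioc 0 r := Ioc_subset_Ioc hs.le htr
  calc ‖fourierIoc g s t u‖
      ≤ ∫ x in Ioc s t, c * x ^ (β - 1) := by
        refine norm_integral_le_of_norm_le (hpow.mono_set hsub) ?_
        filter_upwards [ae_restrict_mem measurableSet_Ioc] with x hx
        rw [norm_mul, norm_exp_neg_I_mul_mul, one_mul, Complex.norm_real]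
        exact hg.abs_le x hx.1
    _ ≤ ∫ x in Ioc 0 r, c * x ^ (β - 1) := by
        refine setIntegral_mono_set hpow ?_ hsub.eventuallyLE
        filter_upwards [ae_restrict_mem measurableSet_Ioc] with x hx
        exact mul_nonneg (hg.const_nonneg) (Real.rpow_nonneg hx.1.le _)
    _ = c / β * r ^ β := by
        rw [← intervalIntegral.integral_of_le hr, intervalIntegral.integral_const_mul,
          integral_rpow (Or.inl (by linarith)), sub_add_cancel, Real.zero_rpow hβ.ne']
        ring

lemma norm_fourierIoc_le_rpow (hg : AntitonePowerTail β c s g) (hβ₀ : 0 < β) (hβ₁ : β < 1)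
    (hs : 0 < s) (t : ℝ) {u : ℝ} (hu : u ≠ 0) (hus : |u| < 1 / s) :
    ‖fourierIoc g s t u‖ ≤ (1 / β + π) * c * |u| ^ (-β) := by
  have hu_pos : 0 < |u| := abs_pos.2 hu
  set r := |u|⁻¹ with hr
  have hr_pos : 0 < r := inv_pos.2 hu_pos
  have hsr : s ≤ r := by
    rw [hr, le_inv_comm₀ hs hu_pos, ← one_div]
    exact hus.le
  have hr_rpow : r ^ β = |u| ^ (-β) := by
    rw [hr, Real.inv_rpow hu_pos.le, Real.rpow_neg hu_pos.le]
  rw [← hr_rpow]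
  have hc := hg.const_nonneg
  rcases le_total t r with htr | hrt
  · refine (hg.norm_fourierIoc_le_of_le_right hβ₀ hs hr_pos.le htr u).trans ?_
    rw [div_eq_mul_one_div, mul_comm c]
    gcongr
    linarith [Real.pi_pos]
  · have hhead := hg.norm_fourierIoc_le_of_le_right hβ₀ hs hr_pos.le le_rfl u
    have htail := (hg.mono_left hsr).norm_fourierIoc_le_inv hβ₁ hr_pos t hu
    calc ‖fourierIoc g s t u‖
        = ‖fourierIoc g s r u + fourierIoc g r t u‖ := by
          rw [fourierIoc_add_adjacent hsr hrt (hg.integrableOn_Ioc hβ₁ hs t)]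
      _ ≤ c / β * r ^ β + π * (c * r ^ (β - 1)) / |u| := norm_add_le_of_le hhead htail
      _ = (1 / β + π) * c * r ^ β := by
          rw [Real.rpow_sub_one hr_pos.ne', hr]
          field_simp

lemma exists_tendsto_fourierIoc (hg : AntitonePowerTail β c s g) (hβ : β < 1) (hs : 0 < s)
    {u : ℝ} (hu : u ≠ 0) : ∃ l, Tendsto (fun t => fourierIoc g s t u) atTop (𝓝 l) := by
  apply cauchySeq_tendsto_of_complete
  rw [Metric.cauchySeq_iff']
  intro ε hε
  have hlim : Tendsto (fun r : ℝ => π * (c * r ^ (β - 1)) / |u|) atTop (𝓝 0) := by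
    simpa using
      (((tendsto_rpow_neg_atTop (sub_pos.2 hβ)).const_mul c).const_mul π).div_const |u|
  obtain ⟨r, hr_lt, hsr⟩ := ((hlim.eventually_lt_const hε).and (eventually_ge_atTop s)).exists
  refine ⟨r, fun t hrt => ?_⟩
  rw [dist_eq_norm, ← fourierIoc_add_adjacent hsr hrt (hg.integrableOn_Ioc hβ hs t),
    add_sub_cancel_left]
  exact ((hg.mono_left hsr).norm_fourierIoc_le_inv hβ (hs.trans_le hsr) t hu).trans_lt hr_lt

end AntitonePowerTail

/-- The conjunction of (K1), with exponent `β` and constant `c`, and (K2), both with threshold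
`b`. -/
structure IsTailKernel (β c b : ℝ) (K : ℝ → ℝ) : Prop where
  abs_le : ∀ x : ℝ, b < |x| → |K x| ≤ c * |x| ^ β
  antitoneOn : AntitoneOn (fun x => K x / x) (Ioi b)
  monotoneOn : MonotoneOn (fun x => K x / x) (Iio (-b))

/-- The truncated transform `(1 / 2π) ∫ e^{-ixu} K_{b,t}(x) / x dx`, with a real truncation level
`t` in place of the paper's `n`. -/
noncomputable def truncatedTransform (K : ℝ → ℝ) (b t u : ℝ) : ℂ :=
  ((1 / (2 * π) : ℝ) : ℂ) * ∫ x : ℝ, Complex.exp (-(Complex.I * (x : ℂ) * (u : ℂ))) *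
    (((if b < |x| ∧ |x| ≤ t then K x else 0) / x : ℝ) : ℂ)

lemma ite_abs_div_eq_indicator_add_indicator_neg (K : ℝ → ℝ) {b : ℝ} (hb : 0 ≤ b) (t x : ℝ) :
    (if b < |x| ∧ |x| ≤ t then K x else 0) / x =
      (Ioc b t).indicator (fun y => K y / y) x +
        (Ioc b t).indicator (fun y => K (-y) / (-y)) (-x) := by
  simp only [indicator_apply, mem_Ioc, neg_neg]
  rcases le_total 0 x with hx | hx
  · rw [abs_of_nonneg hx, if_neg (c := b < -x ∧ -x ≤ t) (fun h => by linarith [h.1]), add_zero,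
      ite_div, zero_div]
  · rw [abs_of_nonpos hx, if_neg (c := b < x ∧ x ≤ t) (fun h => by linarith [h.1]), zero_add,
      ite_div, zero_div]

lemma norm_one_div_two_pi_mul_add_le {a b : ℂ} {B : ℝ} (ha : ‖a‖ ≤ B) (hb : ‖b‖ ≤ B) :
    ‖((1 / (2 * π) : ℝ) : ℂ) * (a + b)‖ ≤ B / π := by
  rw [norm_mul, Complex.norm_real, Real.norm_of_nonneg (by positivity)]
  calc 1 / (2 * π) * ‖a + b‖ ≤ 1 / (2 * π) * (B + B) := by
        gcongr
        exact norm_add_le_of_le ha hb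
    _ = B / π := by field_simp; ring

namespace IsTailKernel

variable {β c b : ℝ} {K : ℝ → ℝ}

lemma mono_const {c' : ℝ} (hK : IsTailKernel β c b K) (hcc' : c ≤ c') :
    IsTailKernel β c' b K :=
  ⟨fun x hx => (hK.abs_le x hx).trans (by gcongr), hK.antitoneOn, hK.monotoneOn⟩

lemma abs_div_le (hK : IsTailKernel β c b K) (hb : 0 < b) {x : ℝ} (hx : b < |x|) :
    |K x / x| ≤ c * |x| ^ (β - 1) := by
  have hx_pos : 0 < |x| := hb.trans hx
  rw [abs_div, Real.rpow_sub_one hx_pos.ne', ← mul_div_assoc]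
  gcongr
  exact hK.abs_le x hx

lemma antitonePowerTail (hK : IsTailKernel β c b K) (hb : 0 < b) :
    AntitonePowerTail β c b fun x => K x / x := by
  refine ⟨hK.antitoneOn, fun x hx => ?_⟩
  have hx_abs : |x| = x := abs_of_pos (hb.trans hx)
  simpa only [hx_abs] using hK.abs_div_le hb (x := x) (by rwa [hx_abs])

lemma antitonePowerTail_neg (hK : IsTailKernel β c b K) (hb : 0 < b) :
    AntitonePowerTail β c b fun x => K (-x) / (-x) := by
  refine ⟨fun x hx y hy hxy => ?_, fun x hx => ?_⟩
  · exact hK.monotoneOn (mem_Iio.2 (neg_lt_neg hy)) (mem_Iio.2 (neg_lt_neg hx)) (neg_le_neg hxy)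
  · have hx_abs : |-x| = x := by rw [abs_neg, abs_of_pos (hb.trans hx)]
    simpa only [hx_abs] using hK.abs_div_le hb (x := -x) (by rwa [hx_abs])

lemma truncatedTransform_eq (hK : IsTailKernel β c b K) (hβ : β < 1) (hb : 0 < b) (t u : ℝ) :
    truncatedTransform K b t u = ((1 / (2 * π) : ℝ) : ℂ) *
      (fourierIoc (fun x => K x / x) b t u + fourierIoc (fun x => K (-x) / (-x)) b t (-u)) := by
  have hpos := integrable_exp_neg_I_mul_mul ((integrable_indicator_iff measurableSet_Ioc).2
    ((hK.antitonePowerTail hb).integrableOn_Ioc hβ hb t)) u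
  have hneg := integrable_exp_neg_I_mul_mul ((integrable_indicator_iff measurableSet_Ioc).2
    ((hK.antitonePowerTail_neg hb).integrableOn_Ioc hβ hb t)) (-u)
  rw [fourierIoc_eq_integral_indicator, fourierIoc_eq_integral_indicator,
    ← integral_neg_eq_self (fun x : ℝ => Complex.exp (-(Complex.I * x * (-u : ℝ))) * _),
    ← integral_add hpos hneg.comp_neg, truncatedTransform]
  congr 2 with x
  rw [ite_abs_div_eq_indicator_add_indicator_neg K hb.le]
  have hexp : Complex.I * ((-x : ℝ) : ℂ) * ((-u : ℝ) : ℂ) = Complex.I * x * u := by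
    push_cast
    ring
  rw [hexp, Complex.ofReal_add, mul_add]

lemma norm_truncatedTransform_le_rpow (hK : IsTailKernel β c b K) (hβ₀ : 0 < β) (hβ₁ : β < 1)
    (hb : 0 < b) (t : ℝ) {u : ℝ} (hu : u ≠ 0) (hub : |u| < 1 / b) :
    ‖truncatedTransform K b t u‖ ≤ (1 / (π * β) + 1) * c * |u| ^ (-β) := by
  have hpos := (hK.antitonePowerTail hb).norm_fourierIoc_le_rpow hβ₀ hβ₁ hb t hu hub
  have hneg := (hK.antitonePowerTail_neg hb).norm_fourierIoc_le_rpow hβ₀ hβ₁ hb t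
    (neg_ne_zero.2 hu) (by rwa [abs_neg])
  rw [abs_neg] at hneg
  rw [hK.truncatedTransform_eq hβ₁ hb]
  refine (norm_one_div_two_pi_mul_add_le hpos hneg).trans_eq ?_
  field_simp

lemma norm_truncatedTransform_le_inv (hK : IsTailKernel β c b K) (hβ : β < 1) (hb : 0 < b)
    (t : ℝ) {u : ℝ} (hu : u ≠ 0) :
    ‖truncatedTransform K b t u‖ ≤ c * b ^ (β - 1) * |u|⁻¹ := by
  have hpos := (hK.antitonePowerTail hb).norm_fourierIoc_le_inv hβ hb t hu
  have hneg := (hK.antitonePowerTail_neg hb).norm_fourierIoc_le_inv hβ hb t (neg_ne_zero.2 hu)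
  rw [abs_neg] at hneg
  rw [hK.truncatedTransform_eq hβ hb]
  refine (norm_one_div_two_pi_mul_add_le hpos hneg).trans_eq ?_
  field_simp

lemma exists_tendsto_truncatedTransform (hK : IsTailKernel β c b K) (hβ : β < 1) (hb : 0 < b) :
    ∃ φ : ℝ → ℂ, ∀ u : ℝ, u ≠ 0 →
      Tendsto (fun t => truncatedTransform K b t u) atTop (𝓝 (φ u)) := by
  have hlim : ∀ u : ℝ, u ≠ 0 → ∃ l, Tendsto (fun t => truncatedTransform K b t u) atTop (𝓝 l) := by
    intro u hu
    obtain ⟨l, hl⟩ := (hK.antitonePowerTail hb).exists_tendsto_fourierIoc hβ hb hu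
    obtain ⟨l', hl'⟩ :=
      (hK.antitonePowerTail_neg hb).exists_tendsto_fourierIoc hβ hb (neg_ne_zero.2 hu)
    simp only [hK.truncatedTransform_eq hβ hb]
    exact ⟨_, (hl.add hl').const_mul _⟩
  choose! φ hφ using hlim
  exact ⟨φ, hφ⟩

end IsTailKernel

theorem stmt12_general (β c : ℝ) (hβ₀ : 0 < β) (hβ₁ : β < 1) :
    (∃ C > (0 : ℝ), ∀ b : ℝ, 0 < b → ∀ K : ℝ → ℝ, IsTailKernel β c b K →
      ∃ φ : ℝ → ℂ,
        (∀ u : ℝ, u ≠ 0 → Tendsto (fun t : ℝ => truncatedTransform K b t u) atTop (𝓝 (φ u))) ∧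
        (∀ u : ℝ, 0 < |u| → |u| < 1 / b → ‖φ u‖ ≤ C * |u| ^ (-β)) ∧
        (∀ u : ℝ, u ≠ 0 → ‖φ u‖ ≤ C * b ^ (β - 1) * |u|⁻¹)) ∧
    (∀ b : ℝ, 0 < b → ∀ K : ℝ → ℝ, IsTailKernel β c b K →
      ∃ C' > (0 : ℝ), ∀ t u : ℝ,
        (0 < |u| → |u| < 1 / b → ‖truncatedTransform K b t u‖ ≤ C' * |u| ^ (-β)) ∧
        (u ≠ 0 → ‖truncatedTransform K b t u‖ ≤ C' * |u|⁻¹)) := by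
  set C := (1 / (π * β) + 1) * max c 1
  have hcC : max c 1 ≤ C :=
    le_mul_of_one_le_left (by positivity) (le_add_of_nonneg_left (by positivity))
  have hC : 0 < C := (lt_max_of_lt_right one_pos).trans_le hcC
  have h_low {b : ℝ} (hb : 0 < b) {K : ℝ → ℝ} (hK : IsTailKernel β c b K) (t : ℝ) {u : ℝ}
      (hu : u ≠ 0) (hub : |u| < 1 / b) : ‖truncatedTransform K b t u‖ ≤ C * |u| ^ (-β) :=
    (hK.mono_const (le_max_left c 1)).norm_truncatedTransform_le_rpow hβ₀ hβ₁ hb t hu hub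
  have h_all {b : ℝ} (hb : 0 < b) {K : ℝ → ℝ} (hK : IsTailKernel β c b K) (t : ℝ) {u : ℝ}
      (hu : u ≠ 0) : ‖truncatedTransform K b t u‖ ≤ C * b ^ (β - 1) * |u|⁻¹ :=
    (hK.mono_const ((le_max_left c 1).trans hcC)).norm_truncatedTransform_le_inv hβ₁ hb t hu
  refine ⟨⟨C, hC, fun b hb K hK => ?_⟩, fun b hb K hK => ?_⟩
  · obtain ⟨φ, hφ⟩ := hK.exists_tendsto_truncatedTransform hβ₁ hb
    refine ⟨φ, hφ, fun u hu hub => ?_, fun u hu => ?_⟩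
    · exact le_of_tendsto' (hφ u (abs_pos.1 hu)).norm fun t =>
        h_low hb hK t (abs_pos.1 hu) hub
    · exact le_of_tendsto' (hφ u hu).norm fun t => h_all hb hK t hu
  · refine ⟨C * max 1 (b ^ (β - 1)), by positivity, fun t u => ⟨fun hu hub => ?_, fun hu => ?_⟩⟩
    · refine (h_low hb hK t (abs_pos.1 hu) hub).trans ?_
      gcongr
      exact le_mul_of_one_le_right hC.le (le_max_left _ _)
    · refine (h_all hb hK t hu).trans ?_
      gcongr
      exact le_max_right _ _

/-- Paper's Lemma 4.1 together with the limit relation (4.12). -/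
theorem stmt12 (β cK : ℝ) (hβ0 : 0 < β) (hβ1 : β < 1) :
    (∃ C > (0:ℝ), ∀ b : ℝ, 1 ≤ b → ∀ K : ℝ → ℝ,
      (∀ x : ℝ, b < |x| → |K x| ≤ cK * |x| ^ β) →
      AntitoneOn (fun x => K x / x) (Set.Ioi b) →
      MonotoneOn (fun x => K x / x) (Set.Iio (-b)) →
      ∃ φ : ℝ → ℂ,
        (∀ u : ℝ, u ≠ 0 → Filter.Tendsto (fun n : ℕ =>
            ((1 / (2 * Real.pi) : ℝ) : ℂ) * ∫ x : ℝ,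
              Complex.exp (-(Complex.I * (x : ℂ) * (u : ℂ))) *
                (((if b < |x| ∧ |x| ≤ (n : ℝ) then K x else 0) / x : ℝ) : ℂ))
          Filter.atTop (nhds (φ u))) ∧
        (∀ u : ℝ, 0 < |u| → |u| < 1 / b → ‖φ u‖ ≤ C * |u| ^ (-β)) ∧
        (∀ u : ℝ, u ≠ 0 → ‖φ u‖ ≤ C * b ^ (β - 1) * |u|⁻¹)) ∧
    (∀ b : ℝ, 1 ≤ b → ∀ K : ℝ → ℝ,
      (∀ x : ℝ, b < |x| → |K x| ≤ cK * |x| ^ β) →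
      AntitoneOn (fun x => K x / x) (Set.Ioi b) →
      MonotoneOn (fun x => K x / x) (Set.Iio (-b)) →
      ∃ C' > (0:ℝ), ∀ n : ℕ, ∀ u : ℝ,
        (0 < |u| → |u| < 1 / b →
          ‖((1 / (2 * Real.pi) : ℝ) : ℂ) * ∫ x : ℝ,
              Complex.exp (-(Complex.I * (x : ℂ) * (u : ℂ))) *
                (((if b < |x| ∧ |x| ≤ (n : ℝ) then K x else 0) / x : ℝ) : ℂ)‖
            ≤ C' * |u| ^ (-β)) ∧
        (u ≠ 0 →
          ‖((1 / (2 * Real.pi) : ℝ) : ℂ) * ∫ x : ℝ,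
              Complex.exp (-(Complex.I * (x : ℂ) * (u : ℂ))) *
                (((if b < |x| ∧ |x| ≤ (n : ℝ) then K x else 0) / x : ℝ) : ℂ)‖
            ≤ C' * |u|⁻¹)) := by
  have ⟨⟨C, hC, hlim⟩, hbound⟩ := stmt12_general β cK hβ0 hβ1
  exact ⟨⟨C, hC, fun b hb K hK hanti hmono =>
    (hlim b (by linarith) K ⟨hK, hanti, hmono⟩).imp fun φ hφ =>
      ⟨fun u hu => (hφ.1 u hu).comp tendsto_natCast_atTop_atTop, hφ.2⟩⟩,
    fun b hb K hK hanti hmono => (hbound b (by linarith) K ⟨hK, hanti, hmono⟩).imp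
      fun _ hC' => ⟨hC'.1, fun n => hC'.2 n⟩⟩
end

section
/- Let α ∈ (1,2) and let f, g ∈ L^α(S, μ) be nonzero and satisfy Assumptions (A1) and (A2). Then for all x, y ∈ ℝ with x ≠ 0 and y ≠ 0, the functions U, D₁ and D₂ are Lebesgue integrable over ℝ² and (1/(2π)²) ∫_ℝ ∫_ℝ e^{−i(xu+yv)} U(u,v) du dv = (1/(ix)) · (1/(2π)²) ∫_ℝ ∫_ℝ e^{−i(xu+yv)} D₁(u,v) du dv = −(1/(xy)) · (1/(2π)²) ∫_ℝ ∫_ℝ e^{−i(xu+yv)} D₂(u,v) du dv. (Paper's Lemma 4.2.) -/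
open MeasureTheory Real Set Filter
open scoped ENNReal Topology

/-
The functions `D₁` and `D₂` are `∂ᵤ U` and, formally, `∂ᵥ ∂ᵤ U`. By (A2) both characteristic
functions decay like `exp (-c (|u| ^ α + |v| ^ α))`, so the claim is integration by parts, once in
each variable. Only the second one is delicate: differentiating the signed power
`(u f + v g)^⟨α - 1⟩` produces `|u f + v g| ^ (α - 2)`, which is singular when `α < 2`. Before
integration over `S` the singularity sits, for fixed `s` and `u`, at the single point
`v = -u f(s) / g(s)`, and its local part is a translate in `v` of the integrable function
`|t| ^ (α - 2)` on `[-1, 1]`. The shear `(s, u, v) ↦ (s, u, v + u f(s) / g(s))` preserves the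
product of `μ` and Lebesgue measure, so the density over `S` is integrable on `S × ℝ²`, and Fubini
reduces the second integration by parts to functions of `v` that are continuous and differentiable
off one point.
-/

section SignedPower

lemma spow_eq_abs_rpow_mul (a p : ℝ) : spow a p = |a| ^ (p - 1) * a := by
  rcases lt_trichotomy a 0 with ha | rfl | ha
  · rw [spow, Real.sign_of_neg ha, abs_of_neg ha, rpow_sub_one (neg_pos.2 ha).ne']
    field_simp [ha.ne]
  · simp [spow]
  · rw [spow, Real.sign_of_pos ha, abs_of_pos ha, rpow_sub_one ha.ne']
    field_simp

lemma abs_spow_le (a p : ℝ) : |spow a p| ≤ |a| ^ p := by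
  rcases eq_or_ne a 0 with rfl | ha
  · simpa [spow] using rpow_nonneg le_rfl p
  · rw [spow_eq_abs_rpow_mul, abs_mul, abs_of_nonneg (by positivity),
      rpow_sub_one (abs_ne_zero.2 ha), div_mul_cancel₀ _ (abs_ne_zero.2 ha)]

lemma hasDerivAt_spow {w : ℝ} (hw : w ≠ 0) (p : ℝ) :
    HasDerivAt (spow · p) (p * |w| ^ (p - 1)) w := by
  have habs : |w| ≠ 0 := abs_ne_zero.2 hw
  have hpow := ((hasDerivAt_abs hw).rpow_const (p := p - 1) (Or.inl habs)).mul (hasDerivAt_id w)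
  refine (hpow.congr_deriv ?_).congr_of_eventuallyEq
    (.of_forall fun a => spow_eq_abs_rpow_mul a p)
  have hsign : (SignType.sign w : ℝ) * w = |w| := sign_mul_self w
  rw [rpow_sub_one habs (p - 1)]
  field_simp
  simp only [id]
  linear_combination (p - 1) * hsign

lemma continuous_spow {p : ℝ} (hp : 0 < p) : Continuous (spow · p) := by
  refine continuous_iff_continuousAt.2 fun w => ?_
  rcases eq_or_ne w 0 with rfl | hw
  · have hlim : Tendsto (fun a : ℝ => |a| ^ p) (𝓝 0) (𝓝 0) := by
      have : Continuous fun a : ℝ => |a| ^ p := continuous_abs.rpow_const fun _ => Or.inr hp.le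
      simpa [hp.ne'] using this.tendsto 0
    simpa [ContinuousAt, spow] using squeeze_zero_norm (fun a => abs_spow_le a p) hlim
  · exact (hasDerivAt_spow hw p).continuousAt

end SignedPower

section LinearCombination

variable {α : ℝ} (p : ℝ × ℝ) (a b : ℝ)

lemma abs_lincomb_le : |p.1 * a + p.2 * b| ≤ ‖p‖ * (|a| + |b|) := by
  calc |p.1 * a + p.2 * b| ≤ |p.1| * |a| + |p.2| * |b| := by
        simpa only [abs_mul] using abs_add_le (p.1 * a) (p.2 * b)
    _ ≤ ‖p‖ * |a| + ‖p‖ * |b| := by gcongr <;> [exact norm_fst_le p; exact norm_snd_le p]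
    _ = ‖p‖ * (|a| + |b|) := by ring

lemma abs_lincomb_rpow_le {q : ℝ} (hq : 0 ≤ q) :
    |p.1 * a + p.2 * b| ^ q ≤ ‖p‖ ^ q * (|a| + |b|) ^ q := by
  rw [← mul_rpow (norm_nonneg p) (by positivity)]
  exact rpow_le_rpow (abs_nonneg _) (abs_lincomb_le p a b) hq

lemma abs_lincomb_rpow_mul_le (hα : 1 ≤ α) {h : ℝ} (hh : |h| ≤ |a| + |b|) :
    |p.1 * a + p.2 * b| ^ (α - 1) * |h| ≤ ‖p‖ ^ (α - 1) * (|a| + |b|) ^ α := by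
  calc |p.1 * a + p.2 * b| ^ (α - 1) * |h|
      ≤ ‖p‖ ^ (α - 1) * (|a| + |b|) ^ (α - 1) * (|a| + |b|) := by
        gcongr
        exact abs_lincomb_rpow_le p a b (by linarith)
    _ = ‖p‖ ^ (α - 1) * (|a| + |b|) ^ α := by
        rw [mul_assoc, ← rpow_add_one' (by positivity) (by linarith), sub_add_cancel]

lemma abs_spow_lincomb_mul_le (hα : 1 ≤ α) {h : ℝ} (hh : |h| ≤ |a| + |b|) :
    |spow (p.1 * a + p.2 * b) (α - 1) * h| ≤ ‖p‖ ^ (α - 1) * (|a| + |b|) ^ α := by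
  rw [abs_mul]
  exact (mul_le_mul_of_nonneg_right (abs_spow_le _ _) (abs_nonneg h)).trans
    (abs_lincomb_rpow_mul_le p a b hα hh)

lemma abs_spow_add_mul_le (hα : 1 ≤ α) {r t : ℝ} (hr : |r - t| ≤ 1) :
    |spow (a + r * b) (α - 1) * b| ≤ (1 + |t|) ^ (α - 1) * (|a| + |b|) ^ α := by
  have hnorm : ‖((1 : ℝ), r)‖ ≤ 1 + |t| := by
    have hle : |r| - |t| ≤ |r - t| := abs_sub_abs_le_abs_sub r t
    simp only [Prod.norm_def, Real.norm_eq_abs, abs_one]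
    exact max_le (by linarith [abs_nonneg t]) (by linarith)
  calc |spow (a + r * b) (α - 1) * b|
      ≤ ‖((1 : ℝ), r)‖ ^ (α - 1) * (|a| + |b|) ^ α := by
        simpa only [one_mul] using
          abs_spow_lincomb_mul_le (1, r) a b hα (le_add_of_nonneg_left (abs_nonneg a))
    _ ≤ (1 + |t|) ^ (α - 1) * (|a| + |b|) ^ α := by
        gcongr

end LinearCombination

section SingularKernel

variable {α : ℝ}

/-- The part of `|t| ^ (α - 2)` near its singularity at `0`, which carries the failure of
boundedness of the mixed second derivative of `|u a + v b| ^ α` in the range `α < 2`. -/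
noncomputable def singularKernel (α : ℝ) : ℝ → ℝ :=
  (Icc (-1) 1).indicator fun t => |t| ^ (α - 2)

lemma singularKernel_nonneg (α t : ℝ) : 0 ≤ singularKernel α t :=
  indicator_nonneg (fun t _ => rpow_nonneg (abs_nonneg t) _) t

lemma integrable_singularKernel (hα : 1 < α) : Integrable (singularKernel α) := by
  rw [singularKernel, integrable_indicator_iff measurableSet_Icc,
    ← intervalIntegrable_iff_integrableOn_Icc_of_le (by norm_num)]
  have hright : IntervalIntegrable (fun t : ℝ => |t| ^ (α - 2)) volume 0 1 := by
    refine (intervalIntegral.intervalIntegrable_rpow' (r := α - 2) (by linarith)).congr ?_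
    intro t ht
    rw [uIoc_of_le zero_le_one] at ht
    simp only [abs_of_pos ht.1]
  have hleft : IntervalIntegrable (fun t : ℝ => |t| ^ (α - 2)) volume (-1) 0 := by
    simpa using ((IntervalIntegrable.iff_comp_neg (by finiteness)).1 hright).symm
  exact hleft.trans hright

lemma abs_rpow_sub_two_mul_le {w a b : ℝ} (hb : |b| ≤ |w|) :
    |w| ^ (α - 2) * |a * b| ≤ |w| ^ (α - 1) * |a| := by
  rcases eq_or_ne w 0 with rfl | hw
  · have hb0 : b = 0 := by simpa using hb
    simpa only [hb0, mul_zero, abs_zero] using by positivity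
  · calc |w| ^ (α - 2) * |a * b| ≤ |w| ^ (α - 2) * (|a| * |w|) := by
          rw [abs_mul]
          gcongr
      _ = |w| ^ (α - 1) * |a| := by
          rw [show α - 1 = α - 2 + 1 by ring, rpow_add_one (abs_ne_zero.2 hw)]
          ring

lemma abs_lincomb_rpow_sub_two_mul_le (hα : 1 ≤ α) (p : ℝ × ℝ) (a b : ℝ) :
    |p.1 * a + p.2 * b| ^ (α - 2) * |a * b| ≤
      (|a| + |b|) ^ α * (‖p‖ ^ (α - 1) + singularKernel α (p.2 + p.1 * (a / b))) := by
  rcases eq_or_ne b 0 with rfl | hb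
  · simpa using mul_nonneg (rpow_nonneg (abs_nonneg a) _)
      (add_nonneg (rpow_nonneg (norm_nonneg p) _) (singularKernel_nonneg α p.2))
  set t := p.2 + p.1 * (a / b) with ht_def
  have hlin : p.1 * a + p.2 * b = b * t := by rw [ht_def]; field_simp; ring
  have hbpos : 0 < |b| := abs_pos.2 hb
  rw [mul_add]
  rcases le_or_gt |t| 1 with ht | ht
  · have hker : singularKernel α t = |t| ^ (α - 2) := indicator_of_mem (mem_Icc.2 (abs_le.1 ht)) _
    have hweight : |b| ^ (α - 1) * |a| ≤ (|a| + |b|) ^ α := by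
      simpa using abs_lincomb_rpow_mul_le ((0 : ℝ), (1 : ℝ)) a b hα (h := a) (by simp)
    calc |p.1 * a + p.2 * b| ^ (α - 2) * |a * b|
        = |b| ^ (α - 1) * |a| * singularKernel α t := by
          rw [hlin, hker, abs_mul, abs_mul, mul_rpow hbpos.le (abs_nonneg t),
            show α - 1 = α - 2 + 1 by ring, rpow_add_one hbpos.ne']
          ring
      _ ≤ (|a| + |b|) ^ α * singularKernel α t := by
          gcongr
          exact singularKernel_nonneg α t
      _ ≤ _ := le_add_of_nonneg_left (by positivity)
  · have hb_le : |b| ≤ |p.1 * a + p.2 * b| := by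
      rw [hlin, abs_mul]
      exact le_mul_of_one_le_right hbpos.le ht.le
    calc |p.1 * a + p.2 * b| ^ (α - 2) * |a * b|
        ≤ |p.1 * a + p.2 * b| ^ (α - 1) * |a| := abs_rpow_sub_two_mul_le hb_le
      _ ≤ ‖p‖ ^ (α - 1) * (|a| + |b|) ^ α := abs_lincomb_rpow_mul_le p a b hα (by simp)
      _ ≤ _ := by
          rw [mul_comm]
          exact le_add_of_nonneg_right
            (mul_nonneg (by positivity) (singularKernel_nonneg α t))

end SingularKernel

section Envelope

variable {α c : ℝ}

lemma integrable_comp_abs {E : Type*} [NormedAddCommGroup E] {f : ℝ → E}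
    (hf : IntegrableOn f (Ioi 0)) :
    Integrable fun t => f |t| := by
  have hIoi : IntegrableOn (fun t => f |t|) (Ioi 0) :=
    hf.congr_fun (fun t ht => by rw [abs_of_pos ht]) measurableSet_Ioi
  have hIio : IntegrableOn (fun t => f |t|) (Iio 0) := by
    have := (Measure.measurePreserving_neg (volume : Measure ℝ)).integrableOn_comp_preimage
      (Homeomorph.neg ℝ).measurableEmbedding (f := fun t => f |t|) (s := Ioi 0)
    simpa [Function.comp_def] using this.2 hIoi
  rw [← integrableOn_univ, ← Iic_union_Ioi (a := (0 : ℝ))]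
  exact ((integrableOn_Iic_iff_integrableOn_Iio (by finiteness)).2 hIio).union hIoi

/-- The envelope `exp (-c (|u| ^ α + |v| ^ α))` under which the characteristic functions decay. -/
noncomputable def stableEnvelope (c α : ℝ) (p : ℝ × ℝ) : ℝ :=
  exp (-c * |p.1| ^ α) * exp (-c * |p.2| ^ α)

lemma stableEnvelope_nonneg (c α : ℝ) (p : ℝ × ℝ) : 0 ≤ stableEnvelope c α p :=
  mul_nonneg (exp_nonneg _) (exp_nonneg _)

lemma integrable_abs_rpow_mul_exp_neg {q : ℝ} (hα : 0 < α) (hc : 0 < c) (hq : -1 < q) :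
    Integrable fun t : ℝ => |t| ^ q * exp (-c * |t| ^ α) :=
  integrable_comp_abs (integrableOn_rpow_mul_exp_neg_mul_rpow hq hα hc)

lemma integrable_exp_neg_abs_rpow (hα : 0 < α) (hc : 0 < c) :
    Integrable fun t : ℝ => exp (-c * |t| ^ α) := by
  simpa using integrable_abs_rpow_mul_exp_neg (q := 0) hα hc (by norm_num)

lemma norm_rpow_le_add_abs_rpow (q : ℝ) (p : ℝ × ℝ) :
    ‖p‖ ^ q ≤ |p.1| ^ q + |p.2| ^ q := by
  rcases max_choice ‖p.1‖ ‖p.2‖ with h | h <;> rw [Prod.norm_def, h, Real.norm_eq_abs]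
  · exact le_add_of_nonneg_right (by positivity)
  · exact le_add_of_nonneg_left (by positivity)

lemma integrable_norm_rpow_mul_stableEnvelope {q : ℝ} (hα : 0 < α) (hc : 0 < c) (hq : 0 ≤ q) :
    Integrable fun p : ℝ × ℝ => ‖p‖ ^ q * stableEnvelope c α p := by
  have hmoment := integrable_abs_rpow_mul_exp_neg hα hc (lt_of_lt_of_le neg_one_lt_zero hq)
  have hexp := integrable_exp_neg_abs_rpow hα hc
  refine ((hmoment.mul_prod hexp).add (hexp.mul_prod hmoment)).mono' ?_ (.of_forall fun p => ?_)
  · have : Measurable fun p : ℝ × ℝ => ‖p‖ ^ q * stableEnvelope c α p := by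
      unfold stableEnvelope; fun_prop
    exact this.aestronglyMeasurable
  · rw [Real.norm_of_nonneg (mul_nonneg (by positivity) (stableEnvelope_nonneg c α p))]
    refine (mul_le_mul_of_nonneg_right (norm_rpow_le_add_abs_rpow q p)
      (stableEnvelope_nonneg c α p)).trans_eq ?_
    simp only [stableEnvelope, Pi.add_apply]
    ring

lemma integrable_of_abs_le_norm_rpow_mul_stableEnvelope {F : ℝ × ℝ → ℝ} {K q : ℝ} (hα : 0 < α)
    (hc : 0 < c) (hq : 0 ≤ q) (hF : Continuous F)
    (hbound : ∀ p, |F p| ≤ K * (‖p‖ ^ q * stableEnvelope c α p)) : Integrable F :=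
  ((integrable_norm_rpow_mul_stableEnvelope hα hc hq).const_mul K).mono'
    hF.aestronglyMeasurable (.of_forall hbound)

end Envelope

section Shear

variable {S : Type*} [MeasurableSpace S] {μ : Measure S} [SFinite μ]

lemma measurePreserving_shear {c : S → ℝ} (hc : Measurable c) :
    MeasurePreserving (fun q : S × ℝ × ℝ => (q.1, q.2.1, q.2.2 + q.2.1 * c q.1))
      (μ.prod volume) (μ.prod volume) := by
  refine (MeasurePreserving.id μ).skew_product (g := fun s (p : ℝ × ℝ) => (p.1, p.2 + p.1 * c s))
    (by fun_prop) (.of_forall fun s => ?_)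
  exact ((MeasurePreserving.id volume).skew_product (g := fun u v => v + u * c s)
    (by fun_prop) (.of_forall fun u => map_add_right_eq_self volume (u * c s))).map_eq

lemma integrable_mul_mul_comp_shear {w c : S → ℝ} {G φ : ℝ → ℝ} (hw : Integrable w μ)
    (hG : Integrable G) (hφ : Integrable φ) (hc : AEMeasurable c μ) :
    Integrable (fun q : S × ℝ × ℝ => w q.1 * (G q.2.1 * φ (q.2.2 + q.2.1 * c q.1)))
      (μ.prod volume) := by
  have hprod : Integrable (fun q : S × ℝ × ℝ => w q.1 * (G q.2.1 * φ q.2.2)) (μ.prod volume) :=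
    hw.mul_prod (hG.mul_prod hφ)
  refine ((measurePreserving_shear hc.measurable_mk).integrable_comp_of_integrable hprod).congr ?_
  filter_upwards [Measure.quasiMeasurePreserving_fst.ae hc.ae_eq_mk] with q hq
  simp only [Function.comp_apply, hq]

end Shear

section Fourier

/-- The character `e ^ (-i (x u + y v))` of the plane, as a function of `(u, v)`. -/
noncomputable def planarCharacter (x y : ℝ) (p : ℝ × ℝ) : ℂ :=
  Complex.exp (-(Complex.I * ((x * p.1 + y * p.2 : ℝ) : ℂ)))

/-- The planar Fourier integral `∬ e ^ (-i (x u + y v)) F(u, v) du dv`, without the customary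
factor `(2 π)⁻²`. -/
noncomputable def planarFourier (x y : ℝ) (F : ℝ × ℝ → ℝ) : ℂ :=
  ∫ p : ℝ × ℝ, planarCharacter x y p * ((F p : ℝ) : ℂ)

lemma integral_deriv_eq_zero_of_hasDerivAt_off_point {E : Type*} [NormedAddCommGroup E]
    [NormedSpace ℝ E] [CompleteSpace E] {k k' : ℝ → E} {c : ℝ} (hk : Continuous k)
    (hd : ∀ v, v ≠ c → HasDerivAt k (k' v) v) (hi : Integrable k) (hi' : Integrable k') :
    ∫ v, k' v = 0 := by
  have hbot : Tendsto k atBot (𝓝 0) :=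
    tendsto_zero_of_hasDerivAt_of_integrableOn_Iic (a := c - 1)
      (fun v hv => hd v (by have : v ≤ c - 1 := hv; linarith)) hi'.integrableOn hi.integrableOn
  have htop : Tendsto k atTop (𝓝 0) :=
    tendsto_zero_of_hasDerivAt_of_integrableOn_Ioi (fun v hv => hd v (ne_of_gt hv))
      hi'.integrableOn hi.integrableOn
  rw [← intervalIntegral.integral_Iic_add_Ioi (b := c) hi'.integrableOn hi'.integrableOn,
    integral_Iic_of_hasDerivAt_of_tendsto hk.continuousWithinAt (fun v hv => hd v (ne_of_lt hv))
      hi'.integrableOn hbot,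
    integral_Ioi_of_hasDerivAt_of_tendsto hk.continuousWithinAt (fun v hv => hd v (ne_of_gt hv))
      hi'.integrableOn htop]
  abel

section Characters

variable (x y : ℝ)

lemma continuous_planarCharacter : Continuous (planarCharacter x y) := by
  unfold planarCharacter
  fun_prop

lemma norm_planarCharacter (p : ℝ × ℝ) : ‖planarCharacter x y p‖ = 1 := by
  simp [planarCharacter, Complex.norm_exp]

lemma hasDerivAt_planarCharacter_snd (u v : ℝ) :
    HasDerivAt (fun v => planarCharacter x y (u, v))
      (planarCharacter x y (u, v) * -(Complex.I * y)) v := by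
  have hphase : HasDerivAt (fun v : ℝ => x * u + y * v) y v := by
    simpa using ((hasDerivAt_id v).const_mul y).const_add (x * u)
  exact (hphase.ofReal_comp.const_mul Complex.I).neg.cexp

lemma integrable_planarCharacter_mul {F : ℝ × ℝ → ℝ} (hF : Integrable F) :
    Integrable fun p => planarCharacter x y p * ((F p : ℝ) : ℂ) :=
  hF.ofReal.bdd_mul (continuous_planarCharacter x y).aestronglyMeasurable
    (.of_forall fun p => (norm_planarCharacter x y p).le)

lemma planarFourier_congr_ae {F G : ℝ × ℝ → ℝ} (h : F =ᵐ[volume] G) :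
    planarFourier x y F = planarFourier x y G :=
  integral_congr_ae (h.mono fun p hp => by simp only [hp])

lemma planarFourier_sub {F G : ℝ × ℝ → ℝ} (hF : Integrable F) (hG : Integrable G) :
    planarFourier x y (fun p => F p - G p) = planarFourier x y F - planarFourier x y G := by
  simp only [planarFourier]
  rw [← integral_sub (integrable_planarCharacter_mul x y hF)
    (integrable_planarCharacter_mul x y hG)]
  simp only [Complex.ofReal_sub, mul_sub]

lemma planarFourier_const_mul (a : ℝ) (F : ℝ × ℝ → ℝ) :
    planarFourier x y (fun p => a * F p) = a * planarFourier x y F := by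
  rw [planarFourier, planarFourier, ← integral_const_mul]
  simp only [Complex.ofReal_mul, mul_left_comm]

lemma planarFourier_comp_swap (F : ℝ × ℝ → ℝ) :
    planarFourier x y (fun p => F p.swap) = planarFourier y x F := by
  rw [planarFourier, planarFourier, Measure.volume_eq_prod, ← integral_prod_swap]
  simp only [planarCharacter, Prod.fst_swap, Prod.snd_swap, Prod.swap_swap, add_comm]

lemma planarFourier_integral {S : Type*} [MeasurableSpace S] {μ : Measure S} [SFinite μ]
    {K : S × ℝ × ℝ → ℝ} (hK : Integrable K (μ.prod volume)) :
    planarFourier x y (fun p => ∫ s, K (s, p) ∂μ) =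
      ∫ s, planarFourier x y (fun p => K (s, p)) ∂μ := by
  have hint : Integrable (fun q : S × ℝ × ℝ => planarCharacter x y q.2 * ((K q : ℝ) : ℂ))
      (μ.prod volume) :=
    hK.ofReal.bdd_mul
      ((continuous_planarCharacter x y).aestronglyMeasurable.comp_quasiMeasurePreserving
        Measure.quasiMeasurePreserving_snd)
      (.of_forall fun q => (norm_planarCharacter x y q.2).le)
  simp only [planarFourier]
  rw [integral_integral_swap hint]
  simp only [integral_const_mul, integral_complex_ofReal]

end Characters

section Derivatives

variable {x y : ℝ}

lemma integral_planarCharacter_mul_deriv {k k' : ℝ → ℝ} {c : ℝ} (u : ℝ) (hk : Continuous k)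
    (hd : ∀ v, v ≠ c → HasDerivAt k (k' v) v) (hi : Integrable k) (hi' : Integrable k') :
    ∫ v, planarCharacter x y (u, v) * ((k' v : ℝ) : ℂ) =
      Complex.I * y * ∫ v, planarCharacter x y (u, v) * ((k v : ℝ) : ℂ) := by
  have hcont : Continuous fun v => planarCharacter x y (u, v) :=
    (continuous_planarCharacter x y).comp (by fun_prop)
  have hint {h : ℝ → ℝ} (hh : Integrable h) :
      Integrable fun v => planarCharacter x y (u, v) * ((h v : ℝ) : ℂ) :=
    hh.ofReal.bdd_mul hcont.aestronglyMeasurable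
      (.of_forall fun v => (norm_planarCharacter x y (u, v)).le)
  have hderiv (v : ℝ) (hv : v ≠ c) :
      HasDerivAt (fun v => planarCharacter x y (u, v) * ((k v : ℝ) : ℂ))
        (planarCharacter x y (u, v) * ((k' v : ℝ) : ℂ) -
          Complex.I * y * (planarCharacter x y (u, v) * ((k v : ℝ) : ℂ))) v :=
    ((hasDerivAt_planarCharacter_snd x y u v).mul (hd v hv).ofReal_comp).congr_deriv (by ring)
  have hzero := integral_deriv_eq_zero_of_hasDerivAt_off_point
    (hcont.mul (Complex.continuous_ofReal.comp hk)) hderiv (hint hi)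
    ((hint hi').sub ((hint hi).const_mul _))
  rwa [integral_sub (hint hi') ((hint hi).const_mul _), integral_const_mul, sub_eq_zero] at hzero

lemma planarFourier_deriv_snd {k k' : ℝ × ℝ → ℝ} (hi : Integrable k) (hi' : Integrable k')
    (hcont : ∀ u, Continuous fun v => k (u, v))
    (hd : ∀ u, ∃ c, ∀ v, v ≠ c → HasDerivAt (fun v => k (u, v)) (k' (u, v)) v) :
    planarFourier x y k' = Complex.I * y * planarFourier x y k := by
  rw [planarFourier, planarFourier, Measure.volume_eq_prod,
    integral_prod _ (integrable_planarCharacter_mul x y hi'),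
    integral_prod _ (integrable_planarCharacter_mul x y hi), ← integral_const_mul]
  refine integral_congr_ae ?_
  filter_upwards [Integrable.prod_right_ae hi, Integrable.prod_right_ae hi'] with u hu hu'
  obtain ⟨c, hc⟩ := hd u
  exact integral_planarCharacter_mul_deriv u (hcont u) hc hu hu'

lemma planarFourier_deriv_fst {k k' : ℝ × ℝ → ℝ} (hi : Integrable k) (hi' : Integrable k')
    (hcont : ∀ v, Continuous fun u => k (u, v))
    (hd : ∀ v, ∃ c, ∀ u, u ≠ c → HasDerivAt (fun u => k (u, v)) (k' (u, v)) u) :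
    planarFourier x y k' = Complex.I * x * planarFourier x y k := by
  rw [← planarFourier_comp_swap y x k', ← planarFourier_comp_swap y x k]
  exact planarFourier_deriv_snd hi.swap hi'.swap hcont hd

lemma planarFourier_integral_deriv_snd {S : Type*} [MeasurableSpace S] {μ : Measure S} [SFinite μ]
    {K K' : S × ℝ × ℝ → ℝ} (hi : Integrable K (μ.prod volume)) (hi' : Integrable K' (μ.prod volume))
    (hcont : ∀ s u, Continuous fun v => K (s, u, v))
    (hd : ∀ s u, ∃ c, ∀ v, v ≠ c → HasDerivAt (fun v => K (s, u, v)) (K' (s, u, v)) v) :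
    planarFourier x y (fun p => ∫ s, K' (s, p) ∂μ) =
      Complex.I * y * planarFourier x y fun p => ∫ s, K (s, p) ∂μ := by
  rw [planarFourier_integral x y hi, planarFourier_integral x y hi', ← integral_const_mul]
  refine integral_congr_ae ?_
  filter_upwards [hi.prod_right_ae, hi'.prod_right_ae] with s hs hs'
  exact planarFourier_deriv_snd hs hs' (hcont s) (hd s)

end Derivatives

end Fourier

section Moments

variable {S : Type*} [MeasurableSpace S] {μ : Measure S} {α : ℝ} {f g h : S → ℝ}

lemma MemLalpha.const_mul (hf : MemLalpha α μ f) (a : ℝ) : MemLalpha α μ fun s => a * f s := by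
  refine ⟨hf.1.const_mul a, ?_⟩
  simpa only [abs_mul, mul_rpow (abs_nonneg _) (abs_nonneg _)] using hf.2.const_mul (|a| ^ α)

lemma MemLalpha.integrable_add_rpow (hα : 1 ≤ α) (hf : MemLalpha α μ f) (hg : MemLalpha α μ g) :
    Integrable (fun s => (|f s| + |g s|) ^ α) μ := by
  refine ((hf.2.add hg.2).const_mul (2 ^ (α - 1))).mono'
    (((hf.1.norm.add hg.1.norm).aemeasurable.pow_const α).aestronglyMeasurable)
    (.of_forall fun s => ?_)
  rw [Real.norm_of_nonneg (by positivity)]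
  exact_mod_cast NNReal.rpow_add_le_mul_rpow_add_rpow ‖f s‖₊ ‖g s‖₊ hα

lemma MemLalpha.add (hα : 1 ≤ α) (hf : MemLalpha α μ f) (hg : MemLalpha α μ g) :
    MemLalpha α μ fun s => f s + g s := by
  refine ⟨hf.1.add hg.1, (hf.integrable_add_rpow hα hg).mono'
    ((hf.1.add hg.1).norm.aemeasurable.pow_const α).aestronglyMeasurable
    (.of_forall fun s => ?_)⟩
  rw [Real.norm_of_nonneg (by positivity)]
  exact rpow_le_rpow (abs_nonneg _) (abs_add_le _ _) (by linarith)

lemma MemLalpha.lincomb (hα : 1 ≤ α) (hf : MemLalpha α μ f) (hg : MemLalpha α μ g) (p : ℝ × ℝ) :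
    MemLalpha α μ fun s => p.1 * f s + p.2 * g s :=
  (hf.const_mul p.1).add hα (hg.const_mul p.2)

lemma nrm_rpow_self (hα : α ≠ 0) (μ : Measure S) (f : S → ℝ) :
    nrm α μ f ^ α = ∫ s, |f s| ^ α ∂μ := by
  rw [nrm, ← rpow_mul (integral_nonneg fun s => by positivity), one_div_mul_cancel hα, rpow_one]

/-- The exponent `‖u f + v g‖_α ^ α` at `p = (u, v)`, as an integral. -/
noncomputable def charExponent (α : ℝ) (μ : Measure S) (f g : S → ℝ) (p : ℝ × ℝ) : ℝ :=
  ∫ s, |p.1 * f s + p.2 * g s| ^ α ∂μ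

/-- The integral `∫ (u f + v g)^⟨α - 1⟩ h dμ` at `p = (u, v)`; for `h = f` and `h = g` it is, up to
the factor `α`, a partial derivative of `charExponent`. -/
noncomputable def signedMoment (α : ℝ) (μ : Measure S) (f g h : S → ℝ) (p : ℝ × ℝ) : ℝ :=
  ∫ s, spow (p.1 * f s + p.2 * g s) (α - 1) * h s ∂μ

lemma continuous_integral_of_abs_le {G : S → ℝ × ℝ → ℝ} {C : ℝ × ℝ → ℝ} {w : S → ℝ}
    (hC : Continuous C) (hw : Integrable w μ) (hw0 : ∀ s, 0 ≤ w s)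
    (hmeas : ∀ p, AEStronglyMeasurable (G · p) μ) (hcont : ∀ s, Continuous (G s))
    (hbound : ∀ s p, |G s p| ≤ C p * w s) : Continuous fun p => ∫ s, G s p ∂μ := by
  refine continuous_iff_continuousAt.2 fun p₀ => ?_
  refine continuousAt_of_dominated (bound := fun s => (C p₀ + 1) * w s) (.of_forall hmeas) ?_
    (hw.const_mul _) (.of_forall fun s => (hcont s).continuousAt)
  filter_upwards [hC.continuousAt.eventually_le_const (lt_add_one (C p₀))] with p hp
  exact .of_forall fun s => (hbound s p).trans (mul_le_mul_of_nonneg_right hp (hw0 s))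

lemma continuous_charExponent (hα : 1 ≤ α) (hf : MemLalpha α μ f) (hg : MemLalpha α μ g) :
    Continuous (charExponent α μ f g) := by
  have hα0 : 0 ≤ α := by linarith
  refine continuous_integral_of_abs_le (C := fun p => ‖p‖ ^ α)
    (continuous_norm.rpow_const fun _ => Or.inr hα0) (hf.integrable_add_rpow hα hg)
    (fun s => by positivity)
    (fun p => (hf.lincomb hα hg p).2.aestronglyMeasurable)
    (fun s => ?_) (fun s p => ?_)
  · exact (by fun_prop : Continuous fun p : ℝ × ℝ => |p.1 * f s + p.2 * g s|).rpow_const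
      fun _ => Or.inr hα0
  · rw [abs_of_nonneg (by positivity)]
    exact abs_lincomb_rpow_le p (f s) (g s) hα0

lemma continuous_signedMoment (hα : 1 < α) (hf : MemLalpha α μ f) (hg : MemLalpha α μ g)
    (hh : AEStronglyMeasurable h μ) (hle : ∀ s, |h s| ≤ |f s| + |g s|) :
    Continuous (signedMoment α μ f g h) := by
  have hα0 : 0 < α - 1 := by linarith
  refine continuous_integral_of_abs_le (C := fun p => ‖p‖ ^ (α - 1))
    (continuous_norm.rpow_const fun _ => Or.inr hα0.le) (hf.integrable_add_rpow hα.le hg)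
    (fun s => by positivity)
    (fun p => ((continuous_spow hα0).comp_aestronglyMeasurable (hf.lincomb hα.le hg p).1).mul hh)
    (fun s => ?_) (fun s p => abs_spow_lincomb_mul_le p (f s) (g s) hα.le (hle s))
  exact ((continuous_spow hα0).comp (by fun_prop)).mul continuous_const

lemma abs_signedMoment_le (hα : 1 ≤ α) (hf : MemLalpha α μ f) (hg : MemLalpha α μ g)
    (hle : ∀ s, |h s| ≤ |f s| + |g s|) (p : ℝ × ℝ) :
    |signedMoment α μ f g h p| ≤ (∫ s, (|f s| + |g s|) ^ α ∂μ) * ‖p‖ ^ (α - 1) := by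
  rw [mul_comm, ← integral_const_mul]
  exact norm_integral_le_of_norm_le ((hf.integrable_add_rpow hα hg).const_mul _)
    (.of_forall fun s => (Real.norm_eq_abs _).trans_le
      (abs_spow_lincomb_mul_le p (f s) (g s) hα (hle s)))

lemma hasDerivAt_abs_add_mul_rpow (hα : 1 < α) (a b t : ℝ) :
    HasDerivAt (fun t => |a + t * b| ^ α) (α * (spow (a + t * b) (α - 1) * b)) t := by
  have hlin : HasDerivAt (fun t => a + t * b) b t := by
    simpa using ((hasDerivAt_id t).mul_const b).const_add a
  refine ((hasDerivAt_abs_rpow (a + t * b) hα).comp t hlin).congr_deriv ?_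
  rw [spow_eq_abs_rpow_mul, show α - 1 - 1 = α - 2 by ring]
  ring

lemma hasDerivAt_integral_abs_add_mul_rpow (hα : 1 < α) (hf : MemLalpha α μ f)
    (hg : MemLalpha α μ g) (t : ℝ) :
    HasDerivAt (fun t => ∫ s, |f s + t * g s| ^ α ∂μ)
      (α * ∫ s, spow (f s + t * g s) (α - 1) * g s ∂μ) t := by
  have hmem (r : ℝ) : MemLalpha α μ fun s => f s + r * g s := hf.add hα.le (hg.const_mul r)
  have hbound (s : S) (r : ℝ) (hr : r ∈ Metric.ball t 1) :
      ‖α * (spow (f s + r * g s) (α - 1) * g s)‖ ≤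
        α * ((1 + |t|) ^ (α - 1) * (|f s| + |g s|) ^ α) := by
    rw [norm_mul, Real.norm_of_nonneg (by linarith : 0 ≤ α)]
    gcongr
    exact abs_spow_add_mul_le (f s) (g s) hα.le (mem_ball_iff_norm.1 hr).le
  rw [← integral_const_mul]
  refine (hasDerivAt_integral_of_dominated_loc_of_deriv_le (Metric.ball_mem_nhds t one_pos)
    (.of_forall fun r => (hmem r).2.aestronglyMeasurable) (hmem t).2 ?_ (.of_forall hbound)
    (((hf.integrable_add_rpow hα.le hg).const_mul _).const_mul _)
    (.of_forall fun s r _ => hasDerivAt_abs_add_mul_rpow hα (f s) (g s) r)).2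
  have hspow := (continuous_spow (sub_pos.2 hα)).comp_aestronglyMeasurable (hmem t).1
  exact (hspow.mul hg.1).const_mul α

lemma hasDerivAt_charExponent_snd (hα : 1 < α) (hf : MemLalpha α μ f) (hg : MemLalpha α μ g)
    (u v : ℝ) :
    HasDerivAt (fun v => charExponent α μ f g (u, v)) (α * signedMoment α μ f g g (u, v)) v :=
  hasDerivAt_integral_abs_add_mul_rpow hα (hf.const_mul u) hg v

lemma hasDerivAt_charExponent_fst (hα : 1 < α) (hf : MemLalpha α μ f) (hg : MemLalpha α μ g)
    (u v : ℝ) :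
    HasDerivAt (fun u => charExponent α μ f g (u, v)) (α * signedMoment α μ f g f (u, v)) u := by
  simpa only [charExponent, signedMoment, add_comm] using
    hasDerivAt_integral_abs_add_mul_rpow hα (hg.const_mul v) hf u

end Moments

section CharacteristicFunctions

variable {S : Type*} [MeasurableSpace S] {μ : Measure S} {α c : ℝ} {f g : S → ℝ}

/-- The joint characteristic function `exp (-‖u f + v g‖_α ^ α)` of the stable vector with spectral
pair `(f, g)`. -/
noncomputable def jointCF (α : ℝ) (μ : Measure S) (f g : S → ℝ) (p : ℝ × ℝ) : ℝ :=
  exp (-charExponent α μ f g p)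

/-- The product `exp (-‖u f‖_α ^ α - ‖v g‖_α ^ α)` of the marginal characteristic functions. -/
noncomputable def indepCF (α : ℝ) (μ : Measure S) (f g : S → ℝ) (p : ℝ × ℝ) : ℝ :=
  exp (-charExponent α μ f g (p.1, 0) - charExponent α μ f g (0, p.2))

/-- The lower bound `c (|u| ^ α + |v| ^ α) ≤ ‖u f + v g‖_α ^ α`, which is assumption (A2) with the
norms of `f` and `g` absorbed into the constant. -/
def CoerciveExponent (c α : ℝ) (μ : Measure S) (f g : S → ℝ) : Prop :=
  ∀ p : ℝ × ℝ, c * (|p.1| ^ α + |p.2| ^ α) ≤ charExponent α μ f g p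

lemma A2.coerciveExponent {ε : ℝ} (hα : α ≠ 0) (hε : 0 ≤ ε) (hA2 : A2 α ε μ f g) :
    CoerciveExponent (ε * min (nrm α μ f ^ α) (nrm α μ g ^ α)) α μ f g := fun p => by
  calc ε * min (nrm α μ f ^ α) (nrm α μ g ^ α) * (|p.1| ^ α + |p.2| ^ α)
      = ε * (|p.1| ^ α * min (nrm α μ f ^ α) (nrm α μ g ^ α) +
          |p.2| ^ α * min (nrm α μ f ^ α) (nrm α μ g ^ α)) := by ring
    _ ≤ ε * (|p.1| ^ α * nrm α μ f ^ α + |p.2| ^ α * nrm α μ g ^ α) := by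
        gcongr
        exacts [min_le_left _ _, min_le_right _ _]
    _ ≤ charExponent α μ f g p := (hA2 p.1 p.2).trans_eq (nrm_rpow_self hα μ _)

lemma jointCF_pos (p : ℝ × ℝ) : 0 < jointCF α μ f g p := exp_pos _

lemma indepCF_pos (p : ℝ × ℝ) : 0 < indepCF α μ f g p := exp_pos _

lemma CoerciveExponent.jointCF_le (h : CoerciveExponent c α μ f g) (p : ℝ × ℝ) :
    jointCF α μ f g p ≤ stableEnvelope c α p := by
  rw [jointCF, stableEnvelope, ← exp_add]
  exact exp_le_exp.2 (by linarith [h p])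

lemma CoerciveExponent.indepCF_le (hα : 0 < α) (h : CoerciveExponent c α μ f g) (p : ℝ × ℝ) :
    indepCF α μ f g p ≤ stableEnvelope c α p := by
  have hfst : c * |p.1| ^ α ≤ charExponent α μ f g (p.1, 0) := by
    simpa [zero_rpow hα.ne'] using h (p.1, 0)
  have hsnd : c * |p.2| ^ α ≤ charExponent α μ f g (0, p.2) := by
    simpa [zero_rpow hα.ne'] using h (0, p.2)
  rw [indepCF, stableEnvelope, ← exp_add]
  exact exp_le_exp.2 (by linarith)

lemma continuous_jointCF (hα : 1 ≤ α) (hf : MemLalpha α μ f) (hg : MemLalpha α μ g) :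
    Continuous (jointCF α μ f g) :=
  continuous_exp.comp (continuous_charExponent hα hf hg).neg

lemma continuous_indepCF (hα : 1 ≤ α) (hf : MemLalpha α μ f) (hg : MemLalpha α μ g) :
    Continuous (indepCF α μ f g) := by
  have hcont := continuous_charExponent hα hf hg
  exact continuous_exp.comp
    ((hcont.comp (by fun_prop)).neg.sub (hcont.comp (by fun_prop)))

lemma hasDerivAt_jointCF_fst (hα : 1 < α) (hf : MemLalpha α μ f) (hg : MemLalpha α μ g)
    (u v : ℝ) :
    HasDerivAt (fun u => jointCF α μ f g (u, v))
      (jointCF α μ f g (u, v) * -(α * signedMoment α μ f g f (u, v))) u :=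
  (hasDerivAt_charExponent_fst hα hf hg u v).neg.exp

lemma hasDerivAt_jointCF_snd (hα : 1 < α) (hf : MemLalpha α μ f) (hg : MemLalpha α μ g)
    (u v : ℝ) :
    HasDerivAt (fun v => jointCF α μ f g (u, v))
      (jointCF α μ f g (u, v) * -(α * signedMoment α μ f g g (u, v))) v :=
  (hasDerivAt_charExponent_snd hα hf hg u v).neg.exp

lemma hasDerivAt_indepCF_fst (hα : 1 < α) (hf : MemLalpha α μ f) (hg : MemLalpha α μ g)
    (u v : ℝ) :
    HasDerivAt (fun u => indepCF α μ f g (u, v))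
      (indepCF α μ f g (u, v) * -(α * signedMoment α μ f g f (u, 0))) u :=
  ((hasDerivAt_charExponent_fst hα hf hg u 0).neg.sub_const (charExponent α μ f g (0, v))).exp

lemma hasDerivAt_indepCF_snd (hα : 1 < α) (hf : MemLalpha α μ f) (hg : MemLalpha α μ g)
    (u v : ℝ) :
    HasDerivAt (fun v => indepCF α μ f g (u, v))
      (indepCF α μ f g (u, v) * -(α * signedMoment α μ f g g (0, v))) v :=
  ((hasDerivAt_charExponent_snd hα hf hg 0 v).const_sub (-charExponent α μ f g (u, 0))).exp

lemma Ufun_eq_jointCF_sub_indepCF (hα : α ≠ 0) (p : ℝ × ℝ) :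
    Ufun α μ f g p.1 p.2 = jointCF α μ f g p - indepCF α μ f g p := by
  simp only [Ufun, jointCF, indepCF, charExponent, nrm_rpow_self hα, zero_mul, add_zero, zero_add]

lemma D1_eq_signedMoment (hα : α ≠ 0) (p : ℝ × ℝ) :
    D1 α μ f g p.1 p.2 = -α * (signedMoment α μ f g f p * jointCF α μ f g p -
      signedMoment α μ f g f (p.1, 0) * indepCF α μ f g p) := by
  simp only [D1, signedMoment, jointCF, indepCF, charExponent, nrm_rpow_self hα, zero_mul,
    add_zero, zero_add]
  ring

/-- The integral `∫ |u f + v g| ^ (α - 2) f g dμ` at `p = (u, v)`. -/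
noncomputable def crossMoment (α : ℝ) (μ : Measure S) (f g : S → ℝ) (p : ℝ × ℝ) : ℝ :=
  ∫ s, |p.1 * f s + p.2 * g s| ^ (α - 2) * (f s * g s) ∂μ

lemma D2_eq_crossMoment (hα : α ≠ 0) (p : ℝ × ℝ) :
    D2 α μ f g p.1 p.2 = -α * ((crossMoment α μ f g p * ((α - 1) * jointCF α μ f g p) -
        signedMoment α μ f g f p * jointCF α μ f g p * (α * signedMoment α μ f g g p)) -
      signedMoment α μ f g f (p.1, 0) *
        (indepCF α μ f g p * -(α * signedMoment α μ f g g (0, p.2)))) := by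
  have hcross (s : S) : (if f s = 0 ∨ g s = 0 then 0 else
      |p.1 * f s + p.2 * g s| ^ (α - 2) * (f s * g s)) =
        |p.1 * f s + p.2 * g s| ^ (α - 2) * (f s * g s) := by
    split_ifs with h
    · rw [mul_eq_zero.2 h, mul_zero]
    · rfl
  simp only [D2, hcross, crossMoment, signedMoment, jointCF, indepCF, charExponent,
    nrm_rpow_self hα, zero_mul, add_zero, zero_add]
  ring

end CharacteristicFunctions

section Densities

variable {S : Type*} [MeasurableSpace S] {μ : Measure S} {α c : ℝ} {f g : S → ℝ}

/-- The density over `S` of `-α⁻¹ ∂ᵤ jointCF`. -/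
noncomputable def gradDensity (α : ℝ) (μ : Measure S) (f g : S → ℝ) (q : S × ℝ × ℝ) : ℝ :=
  spow (q.2.1 * f q.1 + q.2.2 * g q.1) (α - 1) * f q.1 * jointCF α μ f g q.2

/-- The part of `∂ᵥ gradDensity` in which the signed power is differentiated; it is unbounded near
the line `u f + v g = 0` when `α < 2`. -/
noncomputable def crossDensity (α : ℝ) (μ : Measure S) (f g : S → ℝ) (q : S × ℝ × ℝ) : ℝ :=
  |q.2.1 * f q.1 + q.2.2 * g q.1| ^ (α - 2) * (f q.1 * g q.1) * ((α - 1) * jointCF α μ f g q.2)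

/-- The density over `S` of `-α⁻¹ ∂ᵥ ∂ᵤ jointCF`. -/
noncomputable def hessDensity (α : ℝ) (μ : Measure S) (f g : S → ℝ) (q : S × ℝ × ℝ) : ℝ :=
  crossDensity α μ f g q - gradDensity α μ f g q * (α * signedMoment α μ f g g q.2)

lemma integral_gradDensity (p : ℝ × ℝ) :
    ∫ s, gradDensity α μ f g (s, p) ∂μ = signedMoment α μ f g f p * jointCF α μ f g p := by
  simp only [gradDensity, signedMoment, integral_mul_const]

lemma continuous_gradDensity_slice (hα : 1 < α) (hf : MemLalpha α μ f) (hg : MemLalpha α μ g)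
    (s : S) : Continuous fun p => gradDensity α μ f g (s, p) := by
  have hlin : Continuous fun p : ℝ × ℝ => p.1 * f s + p.2 * g s := by fun_prop
  exact (((continuous_spow (sub_pos.2 hα)).comp hlin).mul (continuous_const (y := f s))).mul
    (continuous_jointCF hα.le hf hg)

lemma hasDerivAt_gradDensity_snd (hα : 1 < α) (hf : MemLalpha α μ f) (hg : MemLalpha α μ g)
    {s : S} {u v : ℝ} (hne : u * f s + v * g s ≠ 0 ∨ g s = 0) :
    HasDerivAt (fun v => gradDensity α μ f g (s, u, v)) (hessDensity α μ f g (s, u, v)) v := by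
  have hspow : HasDerivAt (fun v => spow (u * f s + v * g s) (α - 1))
      ((α - 1) * |u * f s + v * g s| ^ (α - 2) * g s) v := by
    rcases hne with hne | hg0
    · have hlin : HasDerivAt (fun v => u * f s + v * g s) (g s) v := by
        simpa using ((hasDerivAt_id v).mul_const (g s)).const_add (u * f s)
      have hcomp := (hasDerivAt_spow hne (α - 1)).comp v hlin
      rwa [show α - 1 - 1 = α - 2 by ring] at hcomp
    · simpa only [hg0, mul_zero] using hasDerivAt_const v _
  refine ((hspow.mul_const (f s)).mul (hasDerivAt_jointCF_snd hα hf hg u v)).congr_deriv ?_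
  simp only [hessDensity, crossDensity, gradDensity]
  ring

lemma exists_hasDerivAt_gradDensity_snd (hα : 1 < α) (hf : MemLalpha α μ f)
    (hg : MemLalpha α μ g) (s : S) (u : ℝ) :
    ∃ v₀, ∀ v, v ≠ v₀ →
      HasDerivAt (fun v => gradDensity α μ f g (s, u, v)) (hessDensity α μ f g (s, u, v)) v := by
  refine ⟨-(u * f s / g s), fun v hv => hasDerivAt_gradDensity_snd hα hf hg ?_⟩
  by_cases hg0 : g s = 0
  · exact Or.inr hg0
  · refine Or.inl fun hzero => hv ?_
    field_simp
    linarith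

lemma abs_gradDensity_le (hα : 1 ≤ α) (hcoer : CoerciveExponent c α μ f g) (q : S × ℝ × ℝ) :
    |gradDensity α μ f g q| ≤
      (|f q.1| + |g q.1|) ^ α * (‖q.2‖ ^ (α - 1) * stableEnvelope c α q.2) := by
  rw [gradDensity, abs_mul, abs_of_pos (jointCF_pos q.2)]
  calc _ ≤ ‖q.2‖ ^ (α - 1) * (|f q.1| + |g q.1|) ^ α * stableEnvelope c α q.2 :=
        mul_le_mul (abs_spow_lincomb_mul_le q.2 (f q.1) (g q.1) hα (by simp)) (hcoer.jointCF_le q.2)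
          (jointCF_pos q.2).le (by positivity)
    _ = _ := by ring

lemma abs_crossDensity_le (hα : 1 ≤ α) (hc : 0 ≤ c) (hcoer : CoerciveExponent c α μ f g)
    (q : S × ℝ × ℝ) :
    |crossDensity α μ f g q| ≤
      (α - 1) * ((|f q.1| + |g q.1|) ^ α * (‖q.2‖ ^ (α - 1) * stableEnvelope c α q.2) +
        (|f q.1| + |g q.1|) ^ α * (exp (-c * |q.2.1| ^ α) *
          singularKernel α (q.2.2 + q.2.1 * (f q.1 / g q.1)))) := by
  have hker : 0 ≤ singularKernel α (q.2.2 + q.2.1 * (f q.1 / g q.1)) := singularKernel_nonneg α _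
  have henv : stableEnvelope c α q.2 ≤ exp (-c * |q.2.1| ^ α) :=
    mul_le_of_le_one_right (exp_nonneg _)
      (exp_le_one_iff.2 (mul_nonpos_of_nonpos_of_nonneg (neg_nonpos.2 hc) (by positivity)))
  rw [crossDensity, abs_mul, abs_mul, abs_of_nonneg (by positivity : (0 : ℝ) ≤ |_| ^ (α - 2)),
    abs_of_nonneg (mul_nonneg (by linarith) (jointCF_pos q.2).le)]
  calc _ ≤ (|f q.1| + |g q.1|) ^ α *
          (‖q.2‖ ^ (α - 1) + singularKernel α (q.2.2 + q.2.1 * (f q.1 / g q.1))) *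
        ((α - 1) * stableEnvelope c α q.2) := by
        have hα0 : 0 ≤ α - 1 := by linarith
        exact mul_le_mul (abs_lincomb_rpow_sub_two_mul_le hα q.2 (f q.1) (g q.1))
          (mul_le_mul_of_nonneg_left (hcoer.jointCF_le q.2) hα0)
          (mul_nonneg hα0 (jointCF_pos q.2).le) (by positivity)
    _ = (α - 1) * ((|f q.1| + |g q.1|) ^ α * (‖q.2‖ ^ (α - 1) * stableEnvelope c α q.2) +
          (|f q.1| + |g q.1|) ^ α * (stableEnvelope c α q.2 *
            singularKernel α (q.2.2 + q.2.1 * (f q.1 / g q.1)))) := by ring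
    _ ≤ _ := by
        have : 0 ≤ α - 1 := by linarith
        gcongr

lemma aestronglyMeasurable_lincomb_prod (hf : AEStronglyMeasurable f μ)
    (hg : AEStronglyMeasurable g μ) :
    AEStronglyMeasurable (fun q : S × ℝ × ℝ => q.2.1 * f q.1 + q.2.2 * g q.1)
      (μ.prod volume) := by
  have hfst : AEStronglyMeasurable (fun q : S × ℝ × ℝ => q.2.1) (μ.prod volume) :=
    (by fun_prop : Measurable _).aestronglyMeasurable
  have hsnd : AEStronglyMeasurable (fun q : S × ℝ × ℝ => q.2.2) (μ.prod volume) :=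
    (by fun_prop : Measurable _).aestronglyMeasurable
  exact (hfst.mul hf.comp_fst).add (hsnd.mul hg.comp_fst)

lemma aestronglyMeasurable_gradDensity (hα : 1 < α) (hf : MemLalpha α μ f)
    (hg : MemLalpha α μ g) :
    AEStronglyMeasurable (gradDensity α μ f g) (μ.prod volume) :=
  (((continuous_spow (sub_pos.2 hα)).comp_aestronglyMeasurable
    (aestronglyMeasurable_lincomb_prod hf.1 hg.1)).mul hf.1.comp_fst).mul
      (continuous_jointCF hα.le hf hg).aestronglyMeasurable.comp_snd

lemma integrable_gradDensity (hα : 1 < α) (hc : 0 < c) (hf : MemLalpha α μ f)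
    (hg : MemLalpha α μ g) (hcoer : CoerciveExponent c α μ f g) :
    Integrable (gradDensity α μ f g) (μ.prod volume) :=
  ((hf.integrable_add_rpow hα.le hg).mul_prod
    (integrable_norm_rpow_mul_stableEnvelope (zero_lt_one.trans hα) hc (sub_pos.2 hα).le)).mono'
    (aestronglyMeasurable_gradDensity hα hf hg)
    (.of_forall fun q => abs_gradDensity_le hα.le hcoer q)

lemma integrable_gradDensity_mul_signedMoment (hα : 1 < α) (hc : 0 < c) (hf : MemLalpha α μ f)
    (hg : MemLalpha α μ g) (hcoer : CoerciveExponent c α μ f g) :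
    Integrable (fun q => gradDensity α μ f g q * (α * signedMoment α μ f g g q.2))
      (μ.prod volume) := by
  have hle (s : S) : |g s| ≤ |f s| + |g s| := le_add_of_nonneg_left (abs_nonneg _)
  set W := ∫ s, (|f s| + |g s|) ^ α ∂μ
  refine (((hf.integrable_add_rpow hα.le hg).mul_prod (integrable_norm_rpow_mul_stableEnvelope
    (zero_lt_one.trans hα) hc (by linarith : 0 ≤ 2 * (α - 1)))).const_mul (α * W)).mono'
    ((aestronglyMeasurable_gradDensity hα hf hg).mul
      ((continuous_signedMoment hα hf hg hg.1 hle).aestronglyMeasurable.comp_snd.const_mul α))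
    (.of_forall fun q => ?_)
  rw [norm_mul, norm_mul, Real.norm_of_nonneg (by linarith : 0 ≤ α), Real.norm_eq_abs,
    Real.norm_eq_abs]
  calc _ ≤ (|f q.1| + |g q.1|) ^ α * (‖q.2‖ ^ (α - 1) * stableEnvelope c α q.2) *
        (α * (W * ‖q.2‖ ^ (α - 1))) := by
        have := stableEnvelope_nonneg c α q.2
        gcongr
        exacts [abs_gradDensity_le hα.le hcoer q, abs_signedMoment_le hα.le hf hg hle q.2]
    _ = _ := by
        rw [two_mul, rpow_add_of_nonneg (norm_nonneg _) (by linarith) (by linarith)]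
        ring
variable [SFinite μ]

lemma integrable_crossDensity (hα : 1 < α) (hc : 0 < c) (hf : MemLalpha α μ f)
    (hg : MemLalpha α μ g) (hcoer : CoerciveExponent c α μ f g) :
    Integrable (crossDensity α μ f g) (μ.prod volume) := by
  have hα0 : 0 < α := by linarith
  have hw := hf.integrable_add_rpow hα.le hg
  have hregular := hw.mul_prod
    (integrable_norm_rpow_mul_stableEnvelope hα0 hc (by linarith : 0 ≤ α - 1))
  have hsingular := integrable_mul_mul_comp_shear hw (integrable_exp_neg_abs_rpow hα0 hc)
    (integrable_singularKernel hα) (hf.1.aemeasurable.div hg.1.aemeasurable)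
  refine ((hregular.add hsingular).const_mul (α - 1)).mono' ?_
    (.of_forall fun q => abs_crossDensity_le hα.le hc.le hcoer q)
  exact (((aestronglyMeasurable_lincomb_prod hf.1 hg.1).norm.aemeasurable.pow_const
      (α - 2)).aestronglyMeasurable.mul (hf.1.comp_fst.mul hg.1.comp_fst)).mul
        ((continuous_jointCF hα.le hf hg).aestronglyMeasurable.comp_snd.const_mul (α - 1))

lemma integrable_hessDensity (hα : 1 < α) (hc : 0 < c) (hf : MemLalpha α μ f)
    (hg : MemLalpha α μ g) (hcoer : CoerciveExponent c α μ f g) :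
    Integrable (hessDensity α μ f g) (μ.prod volume) :=
  (integrable_crossDensity hα hc hf hg hcoer).sub
    (integrable_gradDensity_mul_signedMoment hα hc hf hg hcoer)

lemma integral_hessDensity_ae_eq (hα : 1 < α) (hc : 0 < c) (hf : MemLalpha α μ f)
    (hg : MemLalpha α μ g) (hcoer : CoerciveExponent c α μ f g) :
    (fun p => ∫ s, hessDensity α μ f g (s, p) ∂μ) =ᵐ[volume] fun p =>
      crossMoment α μ f g p * ((α - 1) * jointCF α μ f g p) -
        signedMoment α μ f g f p * jointCF α μ f g p * (α * signedMoment α μ f g g p) := by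
  filter_upwards [(integrable_crossDensity hα hc hf hg hcoer).prod_left_ae,
    (integrable_gradDensity_mul_signedMoment hα hc hf hg hcoer).prod_left_ae] with p hcross hgrad
  simp only [hessDensity]
  rw [integral_sub hcross hgrad]
  simp only [integral_mul_const, integral_gradDensity, crossDensity, crossMoment]

end Densities

section Marginals

variable {S : Type*} [MeasurableSpace S] {μ : Measure S} {α c : ℝ} {f g : S → ℝ}

/-- The derivative `∂ᵤ indepCF`, up to the factor `-α`. -/
noncomputable def indepGrad (α : ℝ) (μ : Measure S) (f g : S → ℝ) (p : ℝ × ℝ) : ℝ :=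
  signedMoment α μ f g f (p.1, 0) * indepCF α μ f g p

/-- The mixed derivative `∂ᵥ ∂ᵤ indepCF`, up to the factor `-α`. -/
noncomputable def indepHess (α : ℝ) (μ : Measure S) (f g : S → ℝ) (p : ℝ × ℝ) : ℝ :=
  signedMoment α μ f g f (p.1, 0) *
    (indepCF α μ f g p * -(α * signedMoment α μ f g g (0, p.2)))

lemma hasDerivAt_indepGrad_snd (hα : 1 < α) (hf : MemLalpha α μ f) (hg : MemLalpha α μ g)
    (u v : ℝ) :
    HasDerivAt (fun v => indepGrad α μ f g (u, v)) (indepHess α μ f g (u, v)) v :=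
  (hasDerivAt_indepCF_snd hα hf hg u v).const_mul (signedMoment α μ f g f (u, 0))

lemma continuous_indepGrad (hα : 1 < α) (hf : MemLalpha α μ f) (hg : MemLalpha α μ g) :
    Continuous (indepGrad α μ f g) :=
  ((continuous_signedMoment hα hf hg hf.1 fun _ => le_add_of_nonneg_right (abs_nonneg _)).comp
    (by fun_prop)).mul (continuous_indepCF hα.le hf hg)

lemma continuous_indepHess (hα : 1 < α) (hf : MemLalpha α μ f) (hg : MemLalpha α μ g) :
    Continuous (indepHess α μ f g) := by
  have hmf := continuous_signedMoment hα hf hg hf.1 fun _ => le_add_of_nonneg_right (abs_nonneg _)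
  have hmg := continuous_signedMoment hα hf hg hg.1 fun _ => le_add_of_nonneg_left (abs_nonneg _)
  exact (hmf.comp (by fun_prop)).mul
    ((continuous_indepCF hα.le hf hg).mul ((hmg.comp (by fun_prop)).const_mul α).neg)

lemma abs_signedMoment_fst_le (hα : 1 ≤ α) (hf : MemLalpha α μ f) (hg : MemLalpha α μ g)
    (p : ℝ × ℝ) :
    |signedMoment α μ f g f (p.1, 0)| ≤ (∫ s, (|f s| + |g s|) ^ α ∂μ) * ‖p‖ ^ (α - 1) := by
  refine (abs_signedMoment_le hα hf hg
    (fun _ => le_add_of_nonneg_right (abs_nonneg _)) (p.1, 0)).trans ?_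
  gcongr
  simpa using norm_fst_le p

lemma abs_signedMoment_snd_le (hα : 1 ≤ α) (hf : MemLalpha α μ f) (hg : MemLalpha α μ g)
    (p : ℝ × ℝ) :
    |signedMoment α μ f g g (0, p.2)| ≤ (∫ s, (|f s| + |g s|) ^ α ∂μ) * ‖p‖ ^ (α - 1) := by
  refine (abs_signedMoment_le hα hf hg
    (fun _ => le_add_of_nonneg_left (abs_nonneg _)) (0, p.2)).trans ?_
  gcongr
  simpa using norm_snd_le p

lemma integrable_indepGrad (hα : 1 < α) (hc : 0 < c) (hf : MemLalpha α μ f)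
    (hg : MemLalpha α μ g) (hcoer : CoerciveExponent c α μ f g) :
    Integrable (indepGrad α μ f g) := by
  have hα0 : 0 < α := by linarith
  refine integrable_of_abs_le_norm_rpow_mul_stableEnvelope (K := ∫ s, (|f s| + |g s|) ^ α ∂μ) hα0 hc
    (sub_pos.2 hα).le (continuous_indepGrad hα hf hg) fun p => ?_
  rw [indepGrad, abs_mul, abs_of_pos (indepCF_pos p), ← mul_assoc]
  exact mul_le_mul (abs_signedMoment_fst_le hα.le hf hg p) (hcoer.indepCF_le hα0 p)
    (indepCF_pos p).le (by positivity)

lemma integrable_indepHess (hα : 1 < α) (hc : 0 < c) (hf : MemLalpha α μ f)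
    (hg : MemLalpha α μ g) (hcoer : CoerciveExponent c α μ f g) :
    Integrable (indepHess α μ f g) := by
  have hα0 : 0 < α := by linarith
  set W := ∫ s, (|f s| + |g s|) ^ α ∂μ
  refine integrable_of_abs_le_norm_rpow_mul_stableEnvelope (K := α * W ^ 2) hα0 hc
    (by linarith : 0 ≤ 2 * (α - 1)) (continuous_indepHess hα hf hg) fun p => ?_
  rw [indepHess, abs_mul, abs_mul, abs_neg, abs_mul, abs_of_pos (indepCF_pos p), abs_of_pos hα0]
  calc _ ≤ W * ‖p‖ ^ (α - 1) * (stableEnvelope c α p * (α * (W * ‖p‖ ^ (α - 1)))) := by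
        have hpos : 0 < indepCF α μ f g p := indepCF_pos p
        have henv := stableEnvelope_nonneg c α p
        gcongr
        exacts [abs_signedMoment_fst_le hα.le hf hg p, hcoer.indepCF_le hα0 p,
          abs_signedMoment_snd_le hα.le hf hg p]
    _ = _ := by
        rw [two_mul, rpow_add_of_nonneg (norm_nonneg _) (by linarith) (by linarith)]
        ring

end Marginals

section Assembly

variable {S : Type*} [MeasurableSpace S] {μ : Measure S} {α c : ℝ} {f g : S → ℝ}

lemma integrable_jointCF (hα : 1 ≤ α) (hc : 0 < c) (hf : MemLalpha α μ f)
    (hg : MemLalpha α μ g) (hcoer : CoerciveExponent c α μ f g) :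
    Integrable (jointCF α μ f g) :=
  integrable_of_abs_le_norm_rpow_mul_stableEnvelope (α := α) (c := c) (K := 1) (q := 0)
    (by linarith) hc le_rfl (continuous_jointCF hα hf hg)
    (fun p => by simpa [abs_of_pos (jointCF_pos p)] using hcoer.jointCF_le p)

lemma integrable_indepCF (hα : 1 ≤ α) (hc : 0 < c) (hf : MemLalpha α μ f)
    (hg : MemLalpha α μ g) (hcoer : CoerciveExponent c α μ f g) :
    Integrable (indepCF α μ f g) :=
  integrable_of_abs_le_norm_rpow_mul_stableEnvelope (α := α) (c := c) (K := 1) (q := 0)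
    (by linarith) hc le_rfl (continuous_indepCF hα hf hg)
    (fun p => by simpa [abs_of_pos (indepCF_pos p)] using hcoer.indepCF_le (by linarith) p)

lemma integrable_Ufun (hα : 1 ≤ α) (hc : 0 < c) (hf : MemLalpha α μ f)
    (hg : MemLalpha α μ g) (hcoer : CoerciveExponent c α μ f g) :
    Integrable fun p : ℝ × ℝ => Ufun α μ f g p.1 p.2 := by
  simp only [Ufun_eq_jointCF_sub_indepCF (by linarith : α ≠ 0)]
  exact (integrable_jointCF hα hc hf hg hcoer).sub (integrable_indepCF hα hc hf hg hcoer)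

lemma hasDerivAt_Ufun_fst (hα : 1 < α) (hf : MemLalpha α μ f) (hg : MemLalpha α μ g) (u v : ℝ) :
    HasDerivAt (fun u => Ufun α μ f g u v) (D1 α μ f g u v) u := by
  have hα0 : α ≠ 0 := by linarith
  rw [D1_eq_signedMoment hα0 (u, v)]
  refine (((hasDerivAt_jointCF_fst hα hf hg u v).sub
    (hasDerivAt_indepCF_fst hα hf hg u v)).congr_deriv (by ring)).congr_of_eventuallyEq
      (.of_forall fun u => Ufun_eq_jointCF_sub_indepCF hα0 (u, v))

lemma D1_eq_integral_gradDensity (hα : α ≠ 0) (p : ℝ × ℝ) :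
    D1 α μ f g p.1 p.2 =
      -α * (∫ s, gradDensity α μ f g (s, p) ∂μ - indepGrad α μ f g p) := by
  rw [D1_eq_signedMoment hα, integral_gradDensity, indepGrad]

variable [SFinite μ]

lemma D2_ae_eq_integral_hessDensity (hα : 1 < α) (hc : 0 < c) (hf : MemLalpha α μ f)
    (hg : MemLalpha α μ g) (hcoer : CoerciveExponent c α μ f g) :
    (fun p : ℝ × ℝ => D2 α μ f g p.1 p.2) =ᵐ[volume] fun p =>
      -α * (∫ s, hessDensity α μ f g (s, p) ∂μ - indepHess α μ f g p) := by
  filter_upwards [integral_hessDensity_ae_eq hα hc hf hg hcoer] with p hp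
  rw [D2_eq_crossMoment (by linarith), hp, indepHess]

lemma integrable_D1 (hα : 1 < α) (hc : 0 < c) (hf : MemLalpha α μ f)
    (hg : MemLalpha α μ g) (hcoer : CoerciveExponent c α μ f g) :
    Integrable fun p : ℝ × ℝ => D1 α μ f g p.1 p.2 := by
  simp only [D1_eq_integral_gradDensity (by linarith : α ≠ 0)]
  exact ((integrable_gradDensity hα hc hf hg hcoer).integral_prod_right.sub
      (integrable_indepGrad hα hc hf hg hcoer)).const_mul (-α)

lemma integrable_D2 (hα : 1 < α) (hc : 0 < c) (hf : MemLalpha α μ f)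
    (hg : MemLalpha α μ g) (hcoer : CoerciveExponent c α μ f g) :
    Integrable fun p : ℝ × ℝ => D2 α μ f g p.1 p.2 :=
  (((integrable_hessDensity hα hc hf hg hcoer).integral_prod_right.sub
    (integrable_indepHess hα hc hf hg hcoer)).const_mul (-α)).congr
      (D2_ae_eq_integral_hessDensity hα hc hf hg hcoer).symm

lemma planarFourier_D1 (hα : 1 < α) (hc : 0 < c) (hf : MemLalpha α μ f)
    (hg : MemLalpha α μ g) (hcoer : CoerciveExponent c α μ f g) (x y : ℝ) :
    planarFourier x y (fun p => D1 α μ f g p.1 p.2) =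
      Complex.I * x * planarFourier x y fun p => Ufun α μ f g p.1 p.2 :=
  planarFourier_deriv_fst (integrable_Ufun hα.le hc hf hg hcoer)
    (integrable_D1 hα hc hf hg hcoer)
    (fun v => continuous_iff_continuousAt.2 fun u =>
      (hasDerivAt_Ufun_fst hα hf hg u v).continuousAt)
    (fun v => ⟨0, fun u _ => hasDerivAt_Ufun_fst hα hf hg u v⟩)

lemma planarFourier_D2 (hα : 1 < α) (hc : 0 < c) (hf : MemLalpha α μ f)
    (hg : MemLalpha α μ g) (hcoer : CoerciveExponent c α μ f g) (x y : ℝ) :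
    planarFourier x y (fun p => D2 α μ f g p.1 p.2) =
      Complex.I * y * planarFourier x y fun p => D1 α μ f g p.1 p.2 := by
  have hgrad := integrable_gradDensity hα hc hf hg hcoer
  have hhess := integrable_hessDensity hα hc hf hg hcoer
  have hGrad := integrable_indepGrad hα hc hf hg hcoer
  have hHess := integrable_indepHess hα hc hf hg hcoer
  have hjoint : planarFourier x y (fun p => ∫ s, hessDensity α μ f g (s, p) ∂μ) =
      Complex.I * y * planarFourier x y fun p => ∫ s, gradDensity α μ f g (s, p) ∂μ :=
    planarFourier_integral_deriv_snd hgrad hhess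
      (fun s u => (continuous_gradDensity_slice hα hf hg s).comp (by fun_prop))
      (exists_hasDerivAt_gradDensity_snd hα hf hg)
  have hindep : planarFourier x y (indepHess α μ f g) =
      Complex.I * y * planarFourier x y (indepGrad α μ f g) :=
    planarFourier_deriv_snd hGrad hHess
      (fun u => (continuous_indepGrad hα hf hg).comp (by fun_prop))
      (fun u => ⟨0, fun v _ => hasDerivAt_indepGrad_snd hα hf hg u v⟩)
  have hD2 : planarFourier x y (fun p => D2 α μ f g p.1 p.2) = planarFourier x y fun p =>
      -α * (∫ s, hessDensity α μ f g (s, p) ∂μ - indepHess α μ f g p) :=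
    planarFourier_congr_ae x y (D2_ae_eq_integral_hessDensity hα hc hf hg hcoer)
  simp only [hD2, D1_eq_integral_gradDensity (by linarith : α ≠ 0)]
  rw [planarFourier_const_mul, planarFourier_const_mul,
    planarFourier_sub x y hhess.integral_prod_right hHess,
    planarFourier_sub x y hgrad.integral_prod_right hGrad, hjoint, hindep]
  ring

end Assembly

theorem stmt13_general {S : Type*} [MeasurableSpace S] (μ : Measure S) [SFinite μ]
    (α ε₂ : ℝ) (hα1 : 1 < α) (hε₂ : 0 < ε₂)
    (f g : S → ℝ) (hf : MemLalpha α μ f) (hg : MemLalpha α μ g)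
    (hfne : 0 < nrm α μ f) (hgne : 0 < nrm α μ g) (hA2 : A2 α ε₂ μ f g)
    (x y : ℝ) (hx : x ≠ 0) (hy : y ≠ 0) :
    Integrable (fun p : ℝ × ℝ => Ufun α μ f g p.1 p.2) volume ∧
    Integrable (fun p : ℝ × ℝ => D1 α μ f g p.1 p.2) volume ∧
    Integrable (fun p : ℝ × ℝ => D2 α μ f g p.1 p.2) volume ∧
    ((1 / (2 * Real.pi) ^ 2 : ℝ) : ℂ) * (∫ p : ℝ × ℝ,
        Complex.exp (-(Complex.I * ((x * p.1 + y * p.2 : ℝ) : ℂ))) *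
          ((Ufun α μ f g p.1 p.2 : ℝ) : ℂ))
      = (1 / (Complex.I * (x : ℂ))) * (((1 / (2 * Real.pi) ^ 2 : ℝ) : ℂ) *
        ∫ p : ℝ × ℝ, Complex.exp (-(Complex.I * ((x * p.1 + y * p.2 : ℝ) : ℂ))) *
          ((D1 α μ f g p.1 p.2 : ℝ) : ℂ)) ∧
    ((1 / (2 * Real.pi) ^ 2 : ℝ) : ℂ) * (∫ p : ℝ × ℝ,
        Complex.exp (-(Complex.I * ((x * p.1 + y * p.2 : ℝ) : ℂ))) *
          ((Ufun α μ f g p.1 p.2 : ℝ) : ℂ))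
      = -(1 / ((x : ℂ) * (y : ℂ))) * (((1 / (2 * Real.pi) ^ 2 : ℝ) : ℂ) *
        ∫ p : ℝ × ℝ, Complex.exp (-(Complex.I * ((x * p.1 + y * p.2 : ℝ) : ℂ))) *
          ((D2 α μ f g p.1 p.2 : ℝ) : ℂ)) := by
  have hα0 : α ≠ 0 := by linarith
  have hc : 0 < ε₂ * min (nrm α μ f ^ α) (nrm α μ g ^ α) := by positivity
  have hcoer := hA2.coerciveExponent hα0 hε₂.le
  have hD1 := planarFourier_D1 hα1 hc hf hg hcoer x y
  have hD2 := planarFourier_D2 hα1 hc hf hg hcoer x y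
  have hxC : (x : ℂ) ≠ 0 := Complex.ofReal_ne_zero.2 hx
  have hyC : (y : ℂ) ≠ 0 := Complex.ofReal_ne_zero.2 hy
  simp only [planarFourier, planarCharacter] at hD1 hD2
  refine ⟨integrable_Ufun hα1.le hc hf hg hcoer, integrable_D1 hα1 hc hf hg hcoer,
    integrable_D2 hα1 hc hf hg hcoer, ?_, ?_⟩
  · rw [hD1]
    field_simp
  · rw [hD2, hD1]
    field_simp
    rw [Complex.I_sq]
    ring

/-- Paper's Lemma 4.2. -/
theorem stmt13 {S : Type*} [MeasurableSpace S] (μ : Measure S) [SigmaFinite μ]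
    (α ε₁ ε₂ : ℝ) (hα1 : 1 < α) (hα2 : α < 2) (hε₁ : 0 < ε₁) (hε₂ : 0 < ε₂)
    (f g : S → ℝ) (hf : MemLalpha α μ f) (hg : MemLalpha α μ g)
    (hfne : 0 < nrm α μ f) (hgne : 0 < nrm α μ g)
    (hA1 : A1 α ε₁ μ f g) (hA2 : A2 α ε₂ μ f g)
    (x y : ℝ) (hx : x ≠ 0) (hy : y ≠ 0) :
    Integrable (fun p : ℝ × ℝ => Ufun α μ f g p.1 p.2) volume ∧
    Integrable (fun p : ℝ × ℝ => D1 α μ f g p.1 p.2) volume ∧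
    Integrable (fun p : ℝ × ℝ => D2 α μ f g p.1 p.2) volume ∧
    ((1 / (2 * Real.pi) ^ 2 : ℝ) : ℂ) * (∫ p : ℝ × ℝ,
        Complex.exp (-(Complex.I * ((x * p.1 + y * p.2 : ℝ) : ℂ))) *
          ((Ufun α μ f g p.1 p.2 : ℝ) : ℂ))
      = (1 / (Complex.I * (x : ℂ))) * (((1 / (2 * Real.pi) ^ 2 : ℝ) : ℂ) *
        ∫ p : ℝ × ℝ, Complex.exp (-(Complex.I * ((x * p.1 + y * p.2 : ℝ) : ℂ))) *
          ((D1 α μ f g p.1 p.2 : ℝ) : ℂ)) ∧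
    ((1 / (2 * Real.pi) ^ 2 : ℝ) : ℂ) * (∫ p : ℝ × ℝ,
        Complex.exp (-(Complex.I * ((x * p.1 + y * p.2 : ℝ) : ℂ))) *
          ((Ufun α μ f g p.1 p.2 : ℝ) : ℂ))
      = -(1 / ((x : ℂ) * (y : ℂ))) * (((1 / (2 * Real.pi) ^ 2 : ℝ) : ℂ) *
        ∫ p : ℝ × ℝ, Complex.exp (-(Complex.I * ((x * p.1 + y * p.2 : ℝ) : ℂ))) *
          ((D2 α μ f g p.1 p.2 : ℝ) : ℂ)) :=
  stmt13_general μ α ε₂ hα1 hε₂ f g hf hg hfne hgne hA2 x y hx hy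
end

section
/- Let α ∈ (1,2), β ∈ (0, α/2) and b ≥ 1. Define F(u) := |u|^{−β} for |u| < 1/b and F(u) := b^{β−1}|u|^{−1} for |u| ≥ 1/b. Then there is a constant C, depending only on α and β, such that for every r > 0, I₀(r) := ∫_0^∞ ∫_0^∞ |ru − v|^{α−2} F(u) F(v) du dv ≤ C b^{2β−α} (1 + r^{α−2}). (Paper's Lemma 5.2.) -/
open MeasureTheory Real Set Filter
open scoped ENNReal Topology

/- Scaling `u` and `v` by `b` gives `F_b(u) = b ^ β F_1(bu)`, so the integral for `b` is exactly
`b ^ (2β - α)` times the integral for `b = 1`. In the latter, `F_1(v) ≤ v ^ q` for every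
`q ∈ [-1, -β]`, and by homogeneity `∫ |ru - v| ^ (α - 2) v ^ q dv` is a constant multiple of
`(ru) ^ δ` with `δ = α - 1 + q`. The integral over `u` of `F_1(u) u ^ δ` leaves a constant times
`r ^ δ`. All integrals converge for a suitable `q` with `α - 2 ≤ δ ≤ 0`, and then
`r ^ δ ≤ 1 + r ^ (α - 2)`. -/

section

variable {p q r s b β δ : ℝ}

lemma rpow_le_one_add_rpow (hr : 0 < r) (hpδ : p ≤ δ) (hδ : δ ≤ 0) : r ^ δ ≤ 1 + r ^ p := by
  rcases le_total r 1 with h | h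
  · exact (rpow_le_rpow_of_exponent_ge hr h hpδ).trans (le_add_of_nonneg_left zero_le_one)
  · exact (rpow_le_one_of_one_le_of_nonpos h hδ).trans (le_add_of_nonneg_right (by positivity))

lemma lintegral_Ioi_comp_mul_left (hb : 0 < b) (f : ℝ → ℝ≥0∞) :
    ∫⁻ x in Ioi 0, f (b * x) = ENNReal.ofReal b⁻¹ * ∫⁻ x in Ioi 0, f x := by
  have hpre : Ioi (0 : ℝ) = (b * ·) ⁻¹' Ioi 0 := by
    ext x
    exact (mul_pos_iff_of_pos_left hb).symm
  have hemb : MeasurableEmbedding (b * · : ℝ → ℝ) := measurableEmbedding_mulLeft₀ hb.ne'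
  conv_lhs => rw [hpre]
  rw [← hemb.lintegral_map, ← hemb.restrict_map, Real.map_volume_mul_left hb.ne',
    Measure.restrict_smul, lintegral_smul_measure, smul_eq_mul, abs_of_pos (inv_pos.2 hb)]

lemma intervalIntegrable_abs_rpow (hp : -1 < p) (a b : ℝ) :
    IntervalIntegrable (fun x : ℝ ↦ |x| ^ p) volume a b := by
  have hloc : LocallyIntegrable (fun x : ℝ ↦ |x| ^ p) := by
    refine locallyIntegrable_of_norm_le_rpow (C := 1) (α := -p) ?_ ?_ (ae_of_all _ fun x ↦ ?_)
      (Measurable.aestronglyMeasurable (by fun_prop))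
    · rw [Module.finrank_self]
    · simpa only [Module.finrank_self, Nat.cast_one] using neg_lt.1 hp
    · rw [neg_neg, one_mul, norm_of_nonneg (by positivity), norm_eq_abs]
  exact (hloc.integrableOn_isCompact isCompact_uIcc).intervalIntegrable

lemma intervalIntegrable_abs_one_sub_rpow_mul_rpow (hp : -1 < p) (hq : -1 < q) :
    IntervalIntegrable (fun v : ℝ ↦ |1 - v| ^ p * v ^ q) volume 0 2 := by
  have hzero : IntervalIntegrable (fun v : ℝ ↦ |1 - v| ^ p * v ^ q) volume 0 (1 / 2) := by
    refine (intervalIntegral.intervalIntegrable_rpow' hq).continuousOn_mul fun v hv ↦ ?_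
    rw [uIcc_of_le (by norm_num)] at hv
    have : |1 - v| ≠ 0 := abs_ne_zero.2 (by linarith [hv.2])
    exact ContinuousAt.continuousWithinAt (by fun_prop (disch := simp [this]))
  have hone : IntervalIntegrable (fun v : ℝ ↦ |1 - v| ^ p * v ^ q) volume (1 / 2) 2 := by
    have hshift := (intervalIntegrable_abs_rpow hp (1 / 2) (-1)).comp_sub_left 1
    norm_num1 at hshift
    refine hshift.mul_continuousOn fun v hv ↦ ?_
    rw [uIcc_of_le (by norm_num)] at hv
    have : v ≠ 0 := by linarith [hv.1]
    exact ContinuousAt.continuousWithinAt (by fun_prop (disch := simp [this]))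
  exact hzero.trans hone

lemma integrableOn_abs_one_sub_rpow_mul_rpow_Ioi_two (hp : p ≤ 0) (hpq : p + q < -1) :
    IntegrableOn (fun v : ℝ ↦ |1 - v| ^ p * v ^ q) (Ioi 2) := by
  refine ((integrableOn_Ioi_rpow_of_lt hpq two_pos).const_mul ((1 / 2) ^ p)).mono'
    (Measurable.aestronglyMeasurable (by fun_prop)) ?_
  filter_upwards [ae_restrict_mem measurableSet_Ioi] with v hv
  have hv2 : 2 < v := hv
  have hv0 : 0 < v := by linarith
  have hhalf : 1 / 2 * v ≤ |1 - v| := by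
    rw [abs_sub_comm, abs_of_pos (by linarith)]
    linarith
  calc ‖|1 - v| ^ p * v ^ q‖ = |1 - v| ^ p * v ^ q := norm_of_nonneg (by positivity)
    _ ≤ (1 / 2 * v) ^ p * v ^ q := by
      gcongr ?_ * _
      exact rpow_le_rpow_of_nonpos (by positivity) hhalf hp
    _ = (1 / 2) ^ p * v ^ (p + q) := by
      rw [mul_rpow (by norm_num) hv0.le, rpow_add hv0, mul_assoc]

/-- The integral of `|1 - v| ^ p * v ^ q` over the positive half-line: the constant by which the
kernel `|s - v| ^ p` acts on the power `v ^ q`. -/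
noncomputable def rieszConst (p q : ℝ) : ℝ≥0∞ :=
  ∫⁻ v in Ioi (0 : ℝ), ENNReal.ofReal (|1 - v| ^ p * v ^ q)

lemma rieszConst_lt_top (hp : -1 < p) (hp0 : p ≤ 0) (hq : -1 < q) (hpq : p + q < -1) :
    rieszConst p q < ∞ := by
  have hnear := (intervalIntegrable_iff_integrableOn_Ioc_of_le zero_le_two).1
    (intervalIntegrable_abs_one_sub_rpow_mul_rpow hp hq)
  have hint := hnear.union (integrableOn_abs_one_sub_rpow_mul_rpow_Ioi_two hp0 hpq)
  rw [Ioc_union_Ioi_eq_Ioi zero_le_two] at hint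
  exact hint.lintegral_lt_top

lemma lintegral_abs_sub_rpow_mul_rpow (hs : 0 < s) :
    ∫⁻ v in Ioi (0 : ℝ), ENNReal.ofReal (|s - v| ^ p * v ^ q) =
      ENNReal.ofReal (s ^ (p + q + 1)) * rieszConst p q := by
  have hhom : ∀ v ∈ Ioi (0 : ℝ), ENNReal.ofReal (|1 - v| ^ p * v ^ q) =
      ENNReal.ofReal (s ^ (-(p + q))) * ENNReal.ofReal (|s - s * v| ^ p * (s * v) ^ q) := by
    intro v hv
    rw [← ENNReal.ofReal_mul (by positivity), ← mul_one_sub, abs_mul, abs_of_pos hs,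
      mul_rpow hs.le (abs_nonneg _), mul_rpow hs.le (le_of_lt hv), rpow_neg hs.le, rpow_add hs]
    congr 1
    field_simp
  rw [rieszConst, setLIntegral_congr_fun measurableSet_Ioi hhom,
    lintegral_const_mul' _ _ ENNReal.ofReal_ne_top,
    lintegral_Ioi_comp_mul_left hs fun v ↦ ENNReal.ofReal (|s - v| ^ p * v ^ q),
    ← mul_assoc, ← mul_assoc, ← ENNReal.ofReal_mul (by positivity),
    ← ENNReal.ofReal_mul (by positivity), ← rpow_neg_one s, ← rpow_add hs, ← rpow_add hs,
    show p + q + 1 + -(p + q) + -1 = 0 by ring, rpow_zero, ENNReal.ofReal_one, one_mul]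

/-- The bilinear form with kernel `|r * u - v| ^ p` on functions on the positive half-line. Its
values are extended nonnegative reals, and negative values of the integrand count as `0`. -/
noncomputable def rieszForm (p r : ℝ) (f g : ℝ → ℝ) : ℝ≥0∞ :=
  ∫⁻ u in Ioi (0 : ℝ), ∫⁻ v in Ioi (0 : ℝ), ENNReal.ofReal (|r * u - v| ^ p * f u * g v)

lemma rieszForm_const_mul_comp_mul_left (hb : 0 < b) (c : ℝ) (f g : ℝ → ℝ) :
    rieszForm p r (fun u ↦ c * f (b * u)) (fun v ↦ c * g (b * v)) =
      ENNReal.ofReal (c ^ 2 * b ^ (-p - 2)) * rieszForm p r f g := by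
  have hhom (u v : ℝ) : ENNReal.ofReal (|r * u - v| ^ p * (c * f (b * u)) * (c * g (b * v))) =
      ENNReal.ofReal (c ^ 2 * b ^ (-p)) *
        ENNReal.ofReal (|r * (b * u) - b * v| ^ p * f (b * u) * g (b * v)) := by
    rw [← ENNReal.ofReal_mul (by positivity), mul_left_comm r b u, ← mul_sub, abs_mul,
      abs_of_pos hb, mul_rpow hb.le (abs_nonneg _), rpow_neg hb.le]
    congr 1
    field_simp
  have hinner (u : ℝ) : ∫⁻ v in Ioi (0 : ℝ),
      ENNReal.ofReal (|r * (b * u) - b * v| ^ p * f (b * u) * g (b * v)) = ENNReal.ofReal b⁻¹ *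
        ∫⁻ v in Ioi (0 : ℝ), ENNReal.ofReal (|r * (b * u) - v| ^ p * f (b * u) * g v) :=
    lintegral_Ioi_comp_mul_left hb fun v ↦
      ENNReal.ofReal (|r * (b * u) - v| ^ p * f (b * u) * g v)
  simp only [rieszForm, hhom, hinner, lintegral_const_mul' _ _ ENNReal.ofReal_ne_top]
  rw [lintegral_Ioi_comp_mul_left hb fun u ↦
      ∫⁻ v in Ioi (0 : ℝ), ENNReal.ofReal (|r * u - v| ^ p * f u * g v),
    ← mul_assoc, ← mul_assoc, ← ENNReal.ofReal_mul (by positivity),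
    ← ENNReal.ofReal_mul (by positivity), sub_eq_add_neg, rpow_add hb, rpow_neg hb.le 2, rpow_two]
  congr 2
  field_simp

lemma rieszForm_le_of_le_rpow {f g : ℝ → ℝ} (hr : 0 < r) (hpq : rieszConst p q ≠ ∞)
    (hf : ∀ u, 0 < u → 0 ≤ f u) (hg : ∀ v, 0 < v → g v ≤ v ^ q) :
    rieszForm p r f g ≤ ENNReal.ofReal (r ^ (p + q + 1)) *
      (rieszConst p q * ∫⁻ u in Ioi (0 : ℝ), ENNReal.ofReal (f u * u ^ (p + q + 1))) := by
  have hinner : ∀ u ∈ Ioi (0 : ℝ),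
      ∫⁻ v in Ioi (0 : ℝ), ENNReal.ofReal (|r * u - v| ^ p * f u * g v) ≤
        ENNReal.ofReal (r ^ (p + q + 1)) * rieszConst p q *
          ENNReal.ofReal (f u * u ^ (p + q + 1)) := by
    intro u (hu : 0 < u)
    have hfu := hf u hu
    calc ∫⁻ v in Ioi (0 : ℝ), ENNReal.ofReal (|r * u - v| ^ p * f u * g v)
        ≤ ∫⁻ v in Ioi (0 : ℝ),
            ENNReal.ofReal (f u) * ENNReal.ofReal (|r * u - v| ^ p * v ^ q) := by
          refine setLIntegral_mono' measurableSet_Ioi fun v hv ↦ ?_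
          rw [← ENNReal.ofReal_mul hfu, ← mul_assoc, mul_comm (f u)]
          gcongr
          exact hg v hv
      _ = ENNReal.ofReal (f u) * (ENNReal.ofReal ((r * u) ^ (p + q + 1)) * rieszConst p q) := by
          rw [lintegral_const_mul' _ _ ENNReal.ofReal_ne_top,
            lintegral_abs_sub_rpow_mul_rpow (mul_pos hr hu)]
      _ = ENNReal.ofReal (r ^ (p + q + 1)) * rieszConst p q *
            ENNReal.ofReal (f u * u ^ (p + q + 1)) := by
          rw [mul_rpow hr.le hu.le, ENNReal.ofReal_mul (by positivity), ENNReal.ofReal_mul hfu]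
          ring
  refine (setLIntegral_mono' measurableSet_Ioi hinner).trans_eq ?_
  rw [lintegral_const_mul' _ _ (ENNReal.mul_ne_top ENNReal.ofReal_ne_top hpq), mul_assoc]

/-- The function `F` of the lemma: the power `|u| ^ (-β)` near the origin, continued as a multiple
of `|u|⁻¹` from the point `|u| = 1 / b` on. -/
noncomputable def profile (b β u : ℝ) : ℝ :=
  if |u| < 1 / b then |u| ^ (-β) else b ^ (β - 1) * |u|⁻¹

lemma profile_nonneg (hb : 0 ≤ b) (u : ℝ) : 0 ≤ profile b β u := by
  unfold profile
  split_ifs <;> positivity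

lemma profile_eq_rpow_mul_profile_one (hb : 0 < b) (u : ℝ) :
    profile b β u = b ^ β * profile 1 β (b * u) := by
  have hiff : |b * u| < 1 / 1 ↔ |u| < 1 / b := by
    rw [abs_mul, abs_of_pos hb, div_one, lt_div_iff₀' hb]
  simp only [profile, if_congr hiff rfl rfl, one_rpow, one_mul]
  rw [abs_mul, abs_of_pos hb]
  split_ifs
  · rw [mul_rpow hb.le (abs_nonneg u), ← mul_assoc, ← rpow_add hb, add_neg_cancel, rpow_zero,
      one_mul]
  · rw [mul_inv, ← mul_assoc, rpow_sub_one hb.ne', div_eq_mul_inv]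

lemma profile_one_of_lt_one {u : ℝ} (hu : 0 < u) (hu1 : u < 1) : profile 1 β u = u ^ (-β) := by
  rw [profile, abs_of_pos hu, div_one, if_pos hu1]

lemma profile_one_of_one_le {u : ℝ} (hu : 1 ≤ u) : profile 1 β u = u ^ (-1 : ℝ) := by
  rw [profile, abs_of_pos (by linarith), div_one, if_neg hu.not_gt, one_rpow, one_mul, rpow_neg_one]

lemma profile_one_le_rpow (hq : -1 ≤ q) (hqβ : q ≤ -β) {u : ℝ} (hu : 0 < u) :
    profile 1 β u ≤ u ^ q := by
  rcases lt_or_ge u 1 with h | h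
  · rw [profile_one_of_lt_one hu h]
    exact rpow_le_rpow_of_exponent_ge hu h.le hqβ
  · rw [profile_one_of_one_le h]
    exact rpow_le_rpow_of_exponent_le h hq

lemma integrableOn_profile_one_mul_rpow (hδβ : -1 < δ - β) (hδ : δ < 0) :
    IntegrableOn (fun u ↦ profile 1 β u * u ^ δ) (Ioi 0) := by
  have hnear : IntegrableOn (fun u ↦ profile 1 β u * u ^ δ) (Ioo 0 1) := by
    refine ((intervalIntegral.integrableOn_Ioo_rpow_iff one_pos).2 hδβ).congr_fun
      (fun u hu ↦ ?_) measurableSet_Ioo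
    rw [profile_one_of_lt_one hu.1 hu.2, ← rpow_add hu.1, neg_add_eq_sub]
  have hfar : IntegrableOn (fun u ↦ profile 1 β u * u ^ δ) (Ici 1) := by
    have hpow : IntegrableOn (fun u : ℝ ↦ u ^ (-1 + δ)) (Ici 1) :=
      (integrableOn_Ici_iff_integrableOn_Ioi).2
        (integrableOn_Ioi_rpow_of_lt (by linarith) one_pos)
    refine hpow.congr_fun (fun u (hu : 1 ≤ u) ↦ ?_) measurableSet_Ici
    rw [profile_one_of_one_le hu, ← rpow_add (by linarith)]
  simpa only [Ioo_union_Ici_eq_Ioi zero_lt_one] using hnear.union hfar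

lemma rieszForm_profile (hb : 0 < b) :
    rieszForm p r (profile b β) (profile b β) =
      ENNReal.ofReal (b ^ (2 * β - p - 2)) * rieszForm p r (profile 1 β) (profile 1 β) := by
  have hscale : profile b β = fun u ↦ b ^ β * profile 1 β (b * u) :=
    funext (profile_eq_rpow_mul_profile_one hb)
  rw [hscale, rieszForm_const_mul_comp_mul_left hb, ← rpow_mul_natCast hb.le, ← rpow_add hb]
  ring_nf

lemma exists_rieszForm_profile_one_le_rpow (hp : -1 < p) (hp0 : p ≤ 0) (hq : -1 < q)
    (hpq : p + q < -1) (hqβ : q ≤ -β) (hβ : β < p + q + 2) :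
    ∃ C > 0, ∀ r, 0 < r → rieszForm p r (profile 1 β) (profile 1 β) ≤
      ENNReal.ofReal (C * r ^ (p + q + 1)) := by
  have hint : ∫⁻ u in Ioi (0 : ℝ), ENNReal.ofReal (profile 1 β u * u ^ (p + q + 1)) < ∞ :=
    (integrableOn_profile_one_mul_rpow (by linarith) (by linarith)).lintegral_lt_top
  have hconst : rieszConst p q < ∞ := rieszConst_lt_top hp hp0 hq hpq
  obtain ⟨C, -, hC, -⟩ := ENNReal.lt_iff_exists_real_btwn.1 (ENNReal.mul_lt_top hconst hint)
  refine ⟨C, ENNReal.ofReal_pos.1 (pos_of_gt hC), fun r hr ↦ ?_⟩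
  have hle := rieszForm_le_of_le_rpow (f := profile 1 β) hr hconst.ne
    (fun u _ ↦ profile_nonneg zero_le_one u) fun v hv ↦ profile_one_le_rpow hq.le hqβ hv
  rw [mul_comm C, ENNReal.ofReal_mul (by positivity)]
  exact hle.trans (by gcongr)

end

theorem stmt15_general (α β : ℝ) (hα1 : 1 < α) (hα2 : α < 2) (hβ : β < α / 2) :
    ∃ C > 0, ∀ b, 0 < b → ∀ r, 0 < r → rieszForm (α - 2) r (profile b β) (profile b β) ≤
      ENNReal.ofReal (C * b ^ (2 * β - α) * (1 + r ^ (α - 2))) := by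
  obtain ⟨q, hql, hqr⟩ : ∃ q, max (-1) (β - α) < q ∧ q < min (-β) (1 - α) := by
    refine exists_between (max_lt ?_ ?_) <;> refine lt_min ?_ ?_ <;> linarith
  obtain ⟨hq, hqβα⟩ := max_lt_iff.1 hql
  obtain ⟨hqβ, hqα⟩ := lt_min_iff.1 hqr
  obtain ⟨C, hC, hone⟩ := exists_rieszForm_profile_one_le_rpow (p := α - 2) (q := q) (β := β)
    (by linarith) (by linarith) hq (by linarith) hqβ.le (by linarith)
  refine ⟨C, hC, fun b hb r hr ↦ ?_⟩
  calc rieszForm (α - 2) r (profile b β) (profile b β)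
      = ENNReal.ofReal (b ^ (2 * β - α)) *
          rieszForm (α - 2) r (profile 1 β) (profile 1 β) := by
        rw [rieszForm_profile hb]
        ring_nf
    _ ≤ ENNReal.ofReal (b ^ (2 * β - α)) *
          ENNReal.ofReal (C * r ^ (α - 2 + q + 1)) := by gcongr; exact hone r hr
    _ = ENNReal.ofReal (C * b ^ (2 * β - α) * r ^ (α - 2 + q + 1)) := by
        rw [← ENNReal.ofReal_mul (by positivity), mul_left_comm, mul_assoc]
    _ ≤ ENNReal.ofReal (C * b ^ (2 * β - α) * (1 + r ^ (α - 2))) := by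
        gcongr
        exact rpow_le_one_add_rpow hr (by linarith) (by linarith)

/-- Paper's Lemma 5.2. -/
theorem stmt15 (α β : ℝ) (hα1 : 1 < α) (hα2 : α < 2) (hβ0 : 0 < β) (hβ : β < α / 2) :
    ∃ C > (0:ℝ), ∀ b : ℝ, 1 ≤ b → ∀ r : ℝ, 0 < r →
      ∫⁻ u in Set.Ioi (0:ℝ), ∫⁻ v in Set.Ioi (0:ℝ),
        ENNReal.ofReal (|r * u - v| ^ (α - 2) *
          (if |u| < 1 / b then |u| ^ (-β) else b ^ (β - 1) * |u|⁻¹) *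
          (if |v| < 1 / b then |v| ^ (-β) else b ^ (β - 1) * |v|⁻¹))
      ≤ ENNReal.ofReal (C * b ^ (2 * β - α) * (1 + r ^ (α - 2))) := by
  obtain ⟨C, hC, h⟩ := stmt15_general α β hα1 hα2 hβ
  exact ⟨C, hC, fun b hb r hr ↦ h b (by linarith) r hr⟩
end
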